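/- arXiv:1706.08682 — 3 statements merged into one kernel-verified Lean document; each statement's English description precedes it below -/
import Mathlib

section
/- Let X be a Banach space, T: L_∞[0,1] → X a bounded operator, and suppose T is not strictly singular. If X is separable, then a contradiction follows; hence every bounded operator from L_∞[0,1] to a separable Banach space is strictly singular. -/
open MeasureTheory ENNReal Filter Set

/-- Lebesgue measure on `[0,1]`. -/
noncomputable def μ01 : Measure ℝ := volume.restrict (Set.Icc 0 1)

instance : Fact (volume (Set.Icc (0:ℝ) 1) < ∞) := ⟨by simp⟩
instance : IsFiniteMeasure μ01 := ⟨by simp [μ01]⟩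

/-- An operator is strictly singular if it is bounded below on no infinite-dimensional
closed subspace. -/
def StrictlySingular {E F : Type*} [NormedAddCommGroup E] [NormedSpace ℝ E]
    [NormedAddCommGroup F] [NormedSpace ℝ F] (T : E →L[ℝ] F) : Prop :=
  ∀ Y : Submodule ℝ E, IsClosed (Y : Set E) → ¬ FiniteDimensional ℝ Y →
    ¬ ∃ c : ℝ, 0 < c ∧ ∀ y ∈ Y, c * ‖y‖ ≤ ‖T y‖

/-- The algebra of bounded measurable real functions. -/
def BM (Ω : Type*) [MeasurableSpace Ω] : Subalgebra ℝ (Ω → ℝ) where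
  carrier := {f | Measurable f ∧ ∃ C, ∀ x, |f x| ≤ C}
  mul_mem' := by
    rintro f g ⟨hf, C, hC⟩ ⟨hg, D, hD⟩
    refine ⟨hf.mul hg, C * D, fun x => ?_⟩
    simp only [Pi.mul_apply, abs_mul]
    exact mul_le_mul (hC x) (hD x) (abs_nonneg _) ((abs_nonneg _).trans (hC x))
  add_mem' := by
    rintro f g ⟨hf, C, hC⟩ ⟨hg, D, hD⟩
    refine ⟨hf.add hg, C + D, fun x => ?_⟩
    exact (abs_add_le _ _).trans (add_le_add (hC x) (hD x))
  algebraMap_mem' := by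
    intro r
    refine ⟨measurable_const, |r|, fun x => ?_⟩
    simp

section BMsec

variable {Ω : Type*} [MeasurableSpace Ω]

theorem BM.meas (f : BM Ω) : Measurable f.1 := f.2.1

/-- Indicator of a measurable set. -/
noncomputable def ind (A : Set Ω) (hA : MeasurableSet A) : BM Ω :=
  ⟨A.indicator 1, measurable_one.indicator hA, 1, fun x => by
    by_cases h : x ∈ A <;> simp [h]⟩

theorem ind_mem {A : Set Ω} {hA : MeasurableSet A} {x : Ω} (h : x ∈ A) : (ind A hA).1 x = 1 := by
  simp [ind, h]

theorem ind_notMem {A : Set Ω} {hA : MeasurableSet A} {x : Ω} (h : x ∉ A) :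
    (ind A hA).1 x = 0 := by
  simp [ind, h]

theorem BM.ext {f g : BM Ω} (h : ∀ x, f.1 x = g.1 x) : f = g := Subtype.ext (funext h)

theorem BM.add_app (f g : BM Ω) (x : Ω) : (f + g).1 x = f.1 x + g.1 x := rfl
theorem BM.sub_app (f g : BM Ω) (x : Ω) : (f - g).1 x = f.1 x - g.1 x := rfl
theorem BM.mul_app (f g : BM Ω) (x : Ω) : (f * g).1 x = f.1 x * g.1 x := rfl
theorem BM.neg_app (f : BM Ω) (x : Ω) : (-f).1 x = -f.1 x := rfl
theorem BM.one_app (x : Ω) : (1 : BM Ω).1 x = 1 := rfl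
theorem BM.zero_app (x : Ω) : (0 : BM Ω).1 x = 0 := rfl
theorem BM.smul_app (c : ℝ) (f : BM Ω) (x : Ω) : (c • f).1 x = c * f.1 x := rfl

/-- `g` is in the unit ball, supported in `A`. -/
def UB (A : Set Ω) (g : BM Ω) : Prop := (∀ x, |g.1 x| ≤ 1) ∧ ∀ x, x ∉ A → g.1 x = 0

theorem UB.mono {A B : Set Ω} (h : A ⊆ B) {g : BM Ω} (hg : UB A g) : UB B g :=
  ⟨hg.1, fun x hx => hg.2 x (fun h' => hx (h h'))⟩

theorem UB.zero (A : Set Ω) : UB A (0 : BM Ω) := ⟨fun x => by simp [BM.zero_app], fun _ _ => rfl⟩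

theorem UB.neg {A : Set Ω} {g : BM Ω} (hg : UB A g) : UB A (-g) :=
  ⟨fun x => by simpa [BM.neg_app] using hg.1 x, fun x hx => by simp [BM.neg_app, hg.2 x hx]⟩

theorem UB.mul_ind {A B C : Set Ω} {g : BM Ω} (hg : UB A g) (hB : MeasurableSet B)
    (h : A ∩ B ⊆ C) : UB C (g * ind B hB) := by
  constructor
  · intro x
    by_cases hx : x ∈ B
    · simpa [BM.mul_app, ind_mem hx] using hg.1 x
    · simp [BM.mul_app, ind_notMem hx]
  · intro x hx
    by_cases hxB : x ∈ B
    · have : x ∉ A := fun hA => hx (h ⟨hA, hxB⟩)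
      simp [BM.mul_app, hg.2 x this]
    · simp [BM.mul_app, ind_notMem hxB]

theorem UB.add {A B : Set Ω} (hd : Disjoint A B) {f g : BM Ω} (hf : UB A f) (hg : UB B g) :
    UB (A ∪ B) (f + g) := by
  constructor
  · intro x
    by_cases hx : x ∈ A
    · have : x ∉ B := fun h => Set.disjoint_left.1 hd hx h
      simpa [BM.add_app, hg.2 x this] using hf.1 x
    · simpa [BM.add_app, hf.2 x hx] using hg.1 x
  · intro x hx
    simp only [Set.mem_union, not_or] at hx
    simp [BM.add_app, hf.2 x hx.1, hg.2 x hx.2]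

theorem BM.split (g : BM Ω) (A : Set Ω) (hA : MeasurableSet A) :
    g = g * ind A hA + g * ind Aᶜ hA.compl := by
  apply BM.ext
  intro x
  by_cases hx : x ∈ A
  · have : x ∉ Aᶜ := fun h => h hx
    simp [BM.add_app, BM.mul_app, ind_mem hx, ind_notMem this]
  · have : x ∈ Aᶜ := hx
    simp [BM.add_app, BM.mul_app, ind_notMem hx, ind_mem this]

section sv

variable {X : Type*} [NormedAddCommGroup X] [NormedSpace ℝ X]

/-- Boundedness with constant `K`. -/
def Bd (T : BM Ω →ₗ[ℝ] X) (K : ℝ) : Prop := ∀ g : BM Ω, (∀ x, |g.1 x| ≤ 1) → ‖T g‖ ≤ K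

/-- Semivariation. -/
noncomputable def sv (T : BM Ω →ₗ[ℝ] X) (A : Set Ω) : ℝ := sSup ((fun g => ‖T g‖) '' {g | UB A g})

variable {T : BM Ω →ₗ[ℝ] X} {K : ℝ}

theorem sv_bdd (hT : Bd T K) (A : Set Ω) : BddAbove ((fun g => ‖T g‖) '' {g | UB A g}) := by
  refine ⟨K, ?_⟩
  rintro _ ⟨g, hg, rfl⟩
  exact hT g hg.1

theorem le_sv (hT : Bd T K) {A : Set Ω} {g : BM Ω} (hg : UB A g) : ‖T g‖ ≤ sv T A :=
  le_csSup (sv_bdd hT A) ⟨g, hg, rfl⟩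

theorem sv_le {A : Set Ω} {C : ℝ} (h : ∀ g, UB A g → ‖T g‖ ≤ C) : sv T A ≤ C := by
  apply csSup_le
  · exact ⟨_, 0, UB.zero A, rfl⟩
  · rintro _ ⟨g, hg, rfl⟩
    exact h g hg

theorem sv_le_K (hT : Bd T K) (A : Set Ω) : sv T A ≤ K := sv_le fun g hg => hT g hg.1

theorem sv_nonneg (hT : Bd T K) (A : Set Ω) : 0 ≤ sv T A := by
  simpa using le_sv hT (UB.zero A)

theorem sv_mono (hT : Bd T K) {A B : Set Ω} (h : A ⊆ B) : sv T A ≤ sv T B :=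
  sv_le fun _ hg => le_sv hT (hg.mono h)

theorem exists_of_lt_sv {A : Set Ω} {C : ℝ} (h : C < sv T A) : ∃ g, UB A g ∧ C < ‖T g‖ := by
  obtain ⟨_, ⟨g, hg, rfl⟩, h'⟩ := exists_lt_of_lt_csSup
    (s := (fun g => ‖T g‖) '' {g | UB A g}) ⟨_, 0, UB.zero A, rfl⟩ h
  exact ⟨g, hg, h'⟩

theorem sv_empty : sv T (∅ : Set Ω) ≤ 0 := by
  refine sv_le fun g hg => ?_
  have : g = 0 := BM.ext fun x => hg.2 x (by simp)
  simp [this]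

theorem sv_union (hT : Bd T K) {A B C : Set Ω} (hA : MeasurableSet A) (hC : C ⊆ A ∪ B) :
    sv T C ≤ sv T A + sv T B := by
  refine sv_le fun g hg => ?_
  rw [BM.split g A hA, map_add]
  refine (norm_add_le _ _).trans (add_le_add (le_sv hT ?_) (le_sv hT ?_))
  · exact hg.mul_ind hA Set.inter_subset_right
  · refine hg.mul_ind hA.compl ?_
    rintro x ⟨h1, h2⟩
    exact (hC h1).resolve_left h2

theorem sv_biUnion (hT : Bd T K) {ι : Type*} (s : Finset ι) (A : ι → Set Ω)
    (hA : ∀ i, MeasurableSet (A i)) {C : Set Ω} (hC : C ⊆ ⋃ i ∈ s, A i) :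
    sv T C ≤ ∑ i ∈ s, sv T (A i) := by
  classical
  induction s using Finset.induction_on generalizing C with
  | empty =>
    have : C = ∅ := by simpa using hC
    simpa [this] using sv_empty
  | insert a s ha ih =>
    rw [Finset.sum_insert ha]
    rw [Finset.set_biUnion_insert] at hC
    exact (sv_union hT (hA a) hC).trans (by gcongr; exact ih subset_rfl)

theorem sv_super {φ : BM Ω →ₗ[ℝ] ℝ} (hφ : Bd φ K) {A B : Set Ω} (hd : Disjoint A B) :
    sv φ A + sv φ B ≤ sv φ (A ∪ B) := by
  have key : ∀ f g, UB A f → UB B g → ‖φ f‖ + ‖φ g‖ ≤ sv φ (A ∪ B) := by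
    have sg : ∀ (A : Set Ω) f, UB A f → ∃ f', UB A f' ∧ φ f' = ‖φ f‖ := by
      intro A f hf
      rcases le_total 0 (φ f) with h | h
      · exact ⟨f, hf, by rw [Real.norm_of_nonneg h]⟩
      · exact ⟨-f, hf.neg, by rw [Real.norm_of_nonpos h, map_neg]⟩
    intro f g hf hg
    obtain ⟨f', hf', ef⟩ := sg A f hf
    obtain ⟨g', hg', eg⟩ := sg B g hg
    rw [← ef, ← eg, ← map_add]
    exact (le_abs_self _).trans (le_sv hφ (hf'.add hd hg'))
  have h1 : ∀ g, UB B g → sv φ A ≤ sv φ (A ∪ B) - ‖φ g‖ := fun g hg =>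
    sv_le fun f hf => by linarith [key f g hf hg]
  have h2 : sv φ B ≤ sv φ (A ∪ B) - sv φ A := sv_le fun g hg => by linarith [h1 g hg]
  linarith

end sv

/-- Rosenthal's lemma (abstract form). -/
theorem rosenthal_aux {ε : ℝ} (hε : 0 < ε) (j : ℕ) : ∀ (v : ℕ → Set ℕ → ℝ),
    (∀ n A, 0 ≤ v n A) → (∀ n A B, Disjoint A B → v n A + v n B ≤ v n (A ∪ B)) →
    (∀ n, v n Set.univ ≤ j * ε) →
    ∃ σ : ℕ → ℕ, Function.Injective σ ∧ ∀ n, v (σ n) (σ '' {n}ᶜ) < ε := by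
  induction j with
  | zero =>
    intro v h0 hs hb
    refine ⟨id, Function.injective_id, fun n => ?_⟩
    have h1 := hs n {n}ᶜ {n} disjoint_compl_left
    have h2 := hb n
    have h3 := h0 n {n}
    rw [Set.compl_union_self] at h1
    rw [Set.image_id]
    simp only [id]
    push_cast at h2
    linarith
  | succ j ih =>
    intro v h0 hs hb
    by_cases hp : ∃ p : ℕ, ∀ i, v (Nat.pair p i) (Nat.pair p '' {i}ᶜ) < ε
    · obtain ⟨p, hp⟩ := hp
      refine ⟨Nat.pair p, fun a b h => ?_, hp⟩
      simpa using h
    · push Not at hp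
      choose i hi using hp
      set k : ℕ → ℕ := fun p => Nat.pair p (i p) with hk
      have kinj : Function.Injective k := fun a b h => by
        simp only [hk, Nat.pair_eq_pair] at h
        exact h.1
      obtain ⟨σ, hσ, h⟩ := ih (fun p A => v (k p) (k '' A)) (fun _ _ => h0 _ _)
        (fun p A B hd => by
          simp only [Set.image_union]
          exact hs _ _ _ (Set.disjoint_image_of_injective kinj hd))
        (fun p => by
          have hd : Disjoint (k '' Set.univ) (Nat.pair p '' {i p}ᶜ) := by
            rw [Set.disjoint_left]
            rintro _ ⟨q, -, rfl⟩ ⟨l, hl, e⟩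
            simp only [hk, Nat.pair_eq_pair] at e
            obtain ⟨rfl, e⟩ := e
            exact hl e
          have h1 := hs (k p) _ _ hd
          have h2 := hi p
          have h3 := hs (k p) (k '' Set.univ ∪ Nat.pair p '' {i p}ᶜ)
            (k '' Set.univ ∪ Nat.pair p '' {i p}ᶜ)ᶜ disjoint_compl_right
          rw [Set.union_compl_self] at h3
          have h4 := hb (k p)
          have h5 := h0 (k p) (k '' Set.univ ∪ Nat.pair p '' {i p}ᶜ)ᶜ
          push_cast at h4
          simp only [hk] at *
          linarith)
      refine ⟨k ∘ σ, kinj.comp hσ, fun n => ?_⟩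
      rw [Set.image_comp]
      exact h n

theorem rosenthal {ε C : ℝ} (hε : 0 < ε) (v : ℕ → Set ℕ → ℝ)
    (h0 : ∀ n A, 0 ≤ v n A) (hs : ∀ n A B, Disjoint A B → v n A + v n B ≤ v n (A ∪ B))
    (hC : ∀ n, v n Set.univ ≤ C) :
    ∃ σ : ℕ → ℕ, Function.Injective σ ∧ ∀ n, v (σ n) (σ '' {n}ᶜ) < ε := by
  obtain ⟨j, hj⟩ := exists_nat_ge (C / ε)
  refine rosenthal_aux hε j v h0 hs fun n => (hC n).trans ?_
  rwa [div_le_iff₀ hε] at hj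

/-- Total variation functional. -/
theorem exists_pos {φ : BM Ω →ₗ[ℝ] ℝ} {K : ℝ} (hφ : Bd φ K) :
    ∃ l : BM Ω →ₗ[ℝ] ℝ, (∀ f : BM Ω, (∀ x, 0 ≤ f.1 x) → 0 ≤ l f) ∧
      ∀ A (hA : MeasurableSet A), sv φ A ≤ l (ind A hA) := by
  have hex : ∀ j : ℕ, ∃ s : BM Ω, UB Set.univ s ∧ sv φ Set.univ - 1 / ((j : ℝ) + 1) < φ s := by
    intro j
    obtain ⟨s, hs, h⟩ := exists_of_lt_sv (T := φ) (A := Set.univ)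
      (C := sv φ Set.univ - 1 / ((j : ℝ) + 1)) (by
        have : 0 < 1 / ((j : ℝ) + 1) := by positivity
        linarith)
    rcases le_total 0 (φ s) with h' | h'
    · exact ⟨s, hs, by rwa [Real.norm_of_nonneg h'] at h⟩
    · exact ⟨-s, hs.neg, by rwa [Real.norm_of_nonpos h', ← map_neg] at h⟩
  choose s hs hlt using hex
  have hbd : ∀ f : BM Ω, ∃ C, ∀ j, |φ (s j * f)| ≤ C := by
    intro f
    obtain ⟨-, C, hC⟩ := f.2
    have hC1 : 0 < |C| + 1 := by positivity
    refine ⟨(|C| + 1) * K, fun j => ?_⟩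
    have : s j * f = (|C| + 1) • ((|C| + 1)⁻¹ • (s j * f)) := by
      rw [smul_smul, mul_inv_cancel₀ hC1.ne', one_smul]
    rw [this, map_smul, smul_eq_mul, abs_mul, abs_of_pos hC1]
    refine mul_le_mul_of_nonneg_left (hφ _ fun x => ?_) hC1.le
    rw [BM.smul_app, BM.mul_app, abs_mul, abs_of_pos (inv_pos.2 hC1), abs_mul,
      inv_mul_le_iff₀ hC1]
    calc |(s j).1 x| * |f.1 x| ≤ 1 * |f.1 x| := by gcongr; exact (hs j).1 x
      _ ≤ (|C| + 1) * 1 := by linarith [hC x, le_abs_self C]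
  let U : Ultrafilter ℕ := Filter.hyperfilter ℕ
  have hlim : ∀ f : BM Ω, ∃ y, Tendsto (fun j => φ (s j * f)) U (nhds y) := by
    intro f
    obtain ⟨C, hC⟩ := hbd f
    have := (isCompact_Icc (a := -C) (b := C)).ultrafilter_le_nhds
      (U.map (fun j => φ (s j * f))) (by
        simp only [Ultrafilter.coe_map, le_principal_iff, Filter.mem_map]
        exact Filter.univ_mem' fun j => abs_le.1 (hC j))
    obtain ⟨y, -, hy⟩ := this
    exact ⟨y, hy⟩
  choose l hl using hlim
  have hz : Tendsto (fun j : ℕ => 1 / ((j : ℝ) + 1)) U (nhds 0) :=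
    tendsto_one_div_add_atTop_nhds_zero_nat.mono_left
      (by rw [← Nat.cofinite_eq_atTop]; exact Filter.hyperfilter_le_cofinite)
  have hone : ∀ (j : ℕ) (g : BM Ω), (∀ x, |g.1 x| ≤ 1) → φ g ≤ φ (s j) + 1 / ((j : ℝ) + 1) := by
    intro j g hg
    have h1 := le_sv hφ (A := Set.univ) (g := g) ⟨hg, fun x hx => (hx trivial).elim⟩
    have h2 := hlt j
    have h3 := le_abs_self (φ g)
    rw [Real.norm_eq_abs] at h1
    linarith
  refine ⟨linearMapOfTendsto (l := (U : Filter ℕ)) l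
    (fun j => φ ∘ₗ LinearMap.mulLeft ℝ (s j)) (tendsto_pi_nhds.2 fun f => hl f), ?_, ?_⟩
  · intro f hf
    change 0 ≤ l f
    obtain ⟨-, C, hC⟩ := f.2
    have hC1 : 0 < |C| + 1 := by positivity
    have h1 : ∀ j : ℕ, -(1 / ((j : ℝ) + 1)) * (|C| + 1) ≤ φ (s j * f) := by
      intro j
      have h2 := hone j (s j - (|C| + 1)⁻¹ • (s j * f)) (fun x => by
        rw [BM.sub_app, BM.smul_app, BM.mul_app]
        have e : (s j).1 x - (|C| + 1)⁻¹ * ((s j).1 x * f.1 x) =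
          (s j).1 x * (1 - (|C| + 1)⁻¹ * f.1 x) := by ring
        have h3 : (|C| + 1)⁻¹ * f.1 x ≤ 1 := by
          rw [inv_mul_le_iff₀ hC1]
          linarith [hC x, le_abs_self C, le_abs_self (f.1 x)]
        have h4 : 0 ≤ (|C| + 1)⁻¹ * f.1 x := mul_nonneg (inv_pos.2 hC1).le (hf x)
        rw [e, abs_mul]
        refine mul_le_one₀ ((hs j).1 x) (abs_nonneg _) ?_
        rw [abs_le]; constructor <;> linarith)
      rw [map_sub, map_smul, smul_eq_mul] at h2
      have h3 : -(1 / ((j : ℝ) + 1)) ≤ (|C| + 1)⁻¹ * φ (s j * f) := by linarith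
      have := mul_le_mul_of_nonneg_right h3 hC1.le
      rwa [mul_comm (_⁻¹), mul_assoc, inv_mul_cancel₀ hC1.ne', mul_one] at this
    have h2 := le_of_tendsto_of_tendsto' (hz.neg.mul_const (|C| + 1)) (hl f) h1
    simpa using h2
  · intro A hA
    change sv φ A ≤ l (ind A hA)
    have h1 : ∀ j : ℕ, sv φ A ≤ φ (s j * ind A hA) + 1 / ((j : ℝ) + 1) := by
      intro j
      have h2 : ∀ g, UB A g → φ g ≤ φ (s j * ind A hA) + 1 / ((j : ℝ) + 1) := by
        intro g hg
        have h3 := hone j (g + s j * ind Aᶜ hA.compl) (UB.add disjoint_compl_right hg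
          ((hs j).mul_ind hA.compl Set.inter_subset_right)).1
        rw [BM.split (s j) A hA] at h3
        have e : (s j * ind A hA + s j * ind Aᶜ hA.compl) * ind Aᶜ hA.compl
          = s j * ind Aᶜ hA.compl := by rw [← BM.split (s j) A hA]
        rw [e, map_add, map_add] at h3
        linarith
      refine sv_le fun g hg => ?_
      rw [Real.norm_eq_abs, abs_le]
      have h3 := h2 _ hg
      have h4 := h2 _ hg.neg
      rw [map_neg] at h4
      constructor <;> linarith
    have h2 := ge_of_tendsto' ((hl (ind A hA)).add hz) h1
    simpa using h2

/-- Gluing of a disjoint sequence. -/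
theorem exists_glue (B : ℕ → Set Ω) (hd : Pairwise (Function.onFun Disjoint B))
    (g : ℕ → BM Ω) (hg : ∀ n, UB (B n) (g n)) :
    ∃ h : BM Ω, UB (⋃ n, B n) h ∧ ∀ n, ∀ x ∈ B n, h.1 x = (g n).1 x := by
  classical
  have hz : ∀ n, ∀ x ∈ B n, ∀ k, k ≠ n → (g k).1 x = 0 := by
    intro n x hx k hk
    exact (hg k).2 x fun h => Set.disjoint_left.1 (hd hk) h hx
  let h : Ω → ℝ := fun x => if hx : ∃ n, x ∈ B n then (g (Classical.choose hx)).1 x else 0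
  have hh : ∀ n, ∀ x ∈ B n, h x = (g n).1 x := by
    intro n x hx
    have hx' : ∃ n, x ∈ B n := ⟨n, hx⟩
    have : Classical.choose hx' = n := by
      by_contra hne
      exact Set.disjoint_left.1 (hd hne) (Classical.choose_spec hx') hx
    simp only [h, hx', dite_true, this]
  have h0 : ∀ x, x ∉ ⋃ n, B n → h x = 0 := by
    intro x hx
    have : ¬ ∃ n, x ∈ B n := by simpa using hx
    simp only [h, this, dite_false]
  have hm : Measurable h := by
    refine measurable_of_tendsto_metrizable
      (f := fun N : ℕ => fun x => ∑ k ∈ Finset.range N, (g k).1 x)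
      (fun N => Finset.measurable_fun_sum _ fun k _ => BM.meas (g k)) ?_
    rw [tendsto_pi_nhds]
    intro x
    by_cases hx : x ∈ ⋃ n, B n
    · obtain ⟨n, hn⟩ := Set.mem_iUnion.1 hx
      refine tendsto_const_nhds.congr' ?_
      filter_upwards [eventually_gt_atTop n] with N hN
      rw [hh n x hn, Finset.sum_eq_single n]
      · intro k _ hk
        exact hz n x hn k hk
      · intro h'
        simp [hN] at h'
    · rw [h0 x hx]
      refine tendsto_const_nhds.congr fun N => ?_
      refine (Finset.sum_eq_zero fun k _ => (hg k).2 x fun h' => hx ?_).symm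
      exact Set.mem_iUnion.2 ⟨k, h'⟩
  have hb : ∀ x, |h x| ≤ 1 := by
    intro x
    by_cases hx : x ∈ ⋃ n, B n
    · obtain ⟨n, hn⟩ := Set.mem_iUnion.1 hx
      rw [hh n x hn]
      exact (hg n).1 x
    · rw [h0 x hx]; simp
  exact ⟨⟨h, hm, 1, hb⟩, ⟨hb, h0⟩, hh⟩

section main

variable {X : Type*} [NormedAddCommGroup X] [NormedSpace ℝ X]
variable {T : BM Ω →ₗ[ℝ] X} {K : ℝ}

theorem Bd.comp (hT : Bd T K) (φ : StrongDual ℝ X) (hφ : ‖φ‖ ≤ 1) :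
    Bd ((φ : X →ₗ[ℝ] ℝ) ∘ₗ T) K := by
  intro g hg
  refine (φ.le_opNorm _).trans ?_
  have := hT g hg
  nlinarith [norm_nonneg (T g)]

theorem sv_comp_le (hT : Bd T K) (φ : StrongDual ℝ X) (hφ : ‖φ‖ ≤ 1) (A : Set Ω) :
    sv ((φ : X →ₗ[ℝ] ℝ) ∘ₗ T) A ≤ sv T A := by
  refine sv_le fun g hg => ?_
  refine (φ.le_opNorm _).trans ?_
  have := le_sv hT hg
  nlinarith [norm_nonneg (T g)]

theorem not_disjoint_seq [TopologicalSpace.SeparableSpace X] (hT : Bd T K)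
    (B : ℕ → Set Ω) (hBm : ∀ n, MeasurableSet (B n))
    (hd : Pairwise (Function.onFun Disjoint B))
    (g : ℕ → BM Ω) (hg : ∀ n, UB (B n) (g n)) {ε : ℝ} (hε : 0 < ε) (hlow : ∀ n, ε ≤ ‖T (g n)‖) :
    False := by
  choose φ hφ1 hφ using fun n => exists_dual_vector'' ℝ (T (g n))
  have hφ' : ∀ n, φ n (T (g n)) = ‖T (g n)‖ := hφ
  let ψ : ℕ → BM Ω →ₗ[ℝ] ℝ := fun n => (φ n : X →ₗ[ℝ] ℝ) ∘ₗ T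
  have hψ : ∀ n, Bd (ψ n) K := fun n => hT.comp _ (hφ1 n)
  obtain ⟨σ, hσ, hsm⟩ := rosenthal (half_pos hε) (C := K)
    (fun n M => sv (ψ n) (⋃ k ∈ M, B k)) (fun n M => sv_nonneg (hψ n) _)
    (fun n M N hMN => by
      simp only [Set.biUnion_union]
      refine sv_super (hψ n) ?_
      simp only [Set.disjoint_iUnion_left, Set.disjoint_iUnion_right]
      intro i hi j hj
      exact hd fun e => Set.disjoint_left.1 hMN (e ▸ hj) hi)
    (fun n => sv_le_K (hψ n) _)
  have hd' : Pairwise (Function.onFun Disjoint fun n => B (σ n)) := fun i j hij => hd (hσ.ne hij)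
  obtain ⟨h, hU, hh⟩ := exists_glue (fun n => B (σ n)) hd' (fun n => g (σ n)) (fun n => hg _)
  have hDm : ∀ D : Set ℕ, MeasurableSet (⋃ k ∈ D, B (σ k)) := fun D =>
    MeasurableSet.biUnion D.to_countable fun k _ => hBm _
  let G : Set ℕ → BM Ω := fun D => h * ind _ (hDm D)
  have key : ∀ D D' : Set ℕ, ∀ n ∈ D, n ∉ D' → ε / 2 ≤ ‖T (G D) - T (G D')‖ := by
    intro D D' n hn hn'
    have hmem : ∀ (D : Set ℕ) m x, x ∈ B (σ m) → (x ∈ (⋃ k ∈ D, B (σ k)) ↔ m ∈ D) := by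
      intro D m x hx
      simp only [Set.mem_iUnion]
      constructor
      · rintro ⟨k, hk, hxk⟩
        by_cases e : k = m
        · exact e ▸ hk
        · exact (Set.disjoint_left.1 (hd' e) hxk hx).elim
      · intro hm
        exact ⟨m, hm, hx⟩
    have hr : UB (⋃ k ∈ σ '' {n}ᶜ, B k) (G D - G D' - g (σ n)) := by
      have cases : ∀ x, (∃ m, x ∈ B (σ m)) ∨ x ∉ ⋃ k, B (σ k) := by
        intro x
        by_cases hx : x ∈ ⋃ k, B (σ k)
        · exact Or.inl (Set.mem_iUnion.1 hx)
        · exact Or.inr hx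
      have hzero : ∀ x, x ∉ ⋃ k, B (σ k) → (G D - G D' - g (σ n)).1 x = 0 := by
        intro x hx
        have h1 : h.1 x = 0 := hU.2 x hx
        have h2 : (g (σ n)).1 x = 0 := (hg _).2 x fun h' => hx (Set.mem_iUnion.2 ⟨n, h'⟩)
        simp only [BM.sub_app, G, BM.mul_app, h1, h2]
        ring
      have hnn : ∀ x, x ∈ B (σ n) → (G D - G D' - g (σ n)).1 x = 0 := by
        intro x hx
        simp only [BM.sub_app, G, BM.mul_app, hh n x hx, ind_mem ((hmem D n x hx).2 hn),
          ind_notMem (fun h' => hn' ((hmem D' n x hx).1 h'))]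
        ring
      constructor
      · intro x
        rcases cases x with ⟨m, hm⟩ | hx
        · by_cases e : m = n
          · rw [e] at hm
            rw [hnn x hm]; simp
          · have h2 : (g (σ n)).1 x = 0 :=
              (hg _).2 x fun h' => Set.disjoint_left.1 (hd' e) hm h'
            have h3 := hU.1 x
            by_cases hD : x ∈ (⋃ k ∈ D, B (σ k)) <;> by_cases hD' : x ∈ (⋃ k ∈ D', B (σ k)) <;>
            simp [BM.sub_app, G, BM.mul_app, h2, ind_mem, ind_notMem, hD, hD', h3]
        · rw [hzero x hx]; simp
      · intro x hx
        rcases cases x with ⟨m, hm⟩ | hx'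
        · by_cases e : m = n
          · rw [e] at hm
            exact hnn x hm
          · refine (hx ?_).elim
            simp only [Set.mem_iUnion]
            exact ⟨σ m, ⟨m, e, rfl⟩, hm⟩
        · exact hzero x hx'
    have h1 := (le_sv (hψ (σ n)) hr).trans (hsm n).le
    have h2 : ψ (σ n) (g (σ n)) = ‖T (g (σ n))‖ := hφ' (σ n)
    have h3 := hlow (σ n)
    have h4 : ‖ψ (σ n) (G D - G D')‖ ≤ ‖T (G D) - T (G D')‖ := by
      change ‖φ (σ n) (T (G D - G D'))‖ ≤ _
      rw [map_sub T]
      refine ((φ (σ n)).le_opNorm _).trans ?_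
      nlinarith [norm_nonneg (T (G D) - T (G D')), hφ1 (σ n)]
    rw [map_sub, h2, Real.norm_eq_abs] at h1
    rw [Real.norm_eq_abs] at h4
    have := neg_abs_le (ψ (σ n) (G D - G D') - ‖T (g (σ n))‖)
    have := le_abs_self (ψ (σ n) (G D - G D'))
    linarith
  have hsep : ∀ D D' : Set ℕ, D ≠ D' → ε / 2 ≤ ‖T (G D) - T (G D')‖ := by
    intro D D' hne
    by_cases h1 : D ⊆ D'
    · have h2 : ¬ D' ⊆ D := fun h2 => hne (h1.antisymm h2)
      obtain ⟨n, a, b⟩ := Set.not_subset.1 h2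
      rw [norm_sub_rev]
      exact key D' D n a b
    · obtain ⟨n, a, b⟩ := Set.not_subset.1 h1
      exact key D D' n a b
  have hdense := TopologicalSpace.denseRange_denseSeq X
  have hnear : ∀ D : Set ℕ, ∃ m : ℕ, dist (T (G D)) (TopologicalSpace.denseSeq X m) < ε / 4 :=
    fun D => hdense.exists_dist_lt _ (by positivity)
  choose m hm using hnear
  refine Function.cantor_injective m fun D D' e => ?_
  by_contra hne
  have h1 := hsep D D' hne
  have h2 := hm D
  have h3 := hm D'
  rw [← e] at h3
  have h4 := dist_triangle_right (T (G D)) (T (G D')) (TopologicalSpace.denseSeq X (m D))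
  rw [dist_eq_norm] at h4
  linarith

theorem exhaustive [TopologicalSpace.SeparableSpace X] (hT : Bd T K)
    (B : ℕ → Set Ω) (hBm : ∀ n, MeasurableSet (B n))
    (hd : Pairwise (Function.onFun Disjoint B)) {ε : ℝ} (hε : 0 < ε)
    (hlow : ∀ n, ε ≤ sv T (B n)) : False := by
  have : ∀ n, ∃ g, UB (B n) g ∧ ε / 2 < ‖T g‖ := fun n =>
    exists_of_lt_sv (by linarith [hlow n])
  choose g hg hl using this
  exact not_disjoint_seq hT B hBm hd g hg (half_pos hε) fun n => (hl n).le

theorem sv_cauchy [TopologicalSpace.SeparableSpace X] (hT : Bd T K)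
    (C : ℕ → Set Ω) (hCm : ∀ n, MeasurableSet (C n)) (hC : Monotone C) {η : ℝ} (hη : 0 < η) :
    ∃ m, ∀ m' ≥ m, sv T (C m' \ C m) ≤ η := by
  by_contra hcon
  push Not at hcon
  choose f hf1 hf2 using hcon
  let m : ℕ → ℕ := fun i => f^[i] 0
  have hms : ∀ i, m (i + 1) = f (m i) := fun i => Function.iterate_succ_apply' f i 0
  have hmm : Monotone m := monotone_nat_of_le_succ fun i => by rw [hms]; exact hf1 _
  refine exhaustive hT (fun i => C (m (i + 1)) \ C (m i)) (fun i => (hCm _).diff (hCm _)) ?_ hη ?_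
  · refine (pairwise_disjoint_on _).2 fun i j hij => ?_
    rw [Set.disjoint_left]
    rintro x ⟨h1, -⟩ ⟨-, h2⟩
    exact h2 (hC (hmm hij) h1)
  · intro i
    rw [hms]
    exact (hf2 _).le

/-- The control argument. -/
theorem no_control [TopologicalSpace.SeparableSpace X] (hT : Bd T K)
    (A : ℕ → Set Ω) (hA : ∀ n, MeasurableSet (A n)) (φ : ℕ → StrongDual ℝ X)
    (hφ : ∀ n, ‖φ n‖ ≤ 1) {ε : ℝ} (hε : 0 < ε)
    (h1 : ∀ n, ε ≤ sv ((φ n : X →ₗ[ℝ] ℝ) ∘ₗ T) (A n))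
    (h2 : ∀ k n, k < n → sv ((φ k : X →ₗ[ℝ] ℝ) ∘ₗ T) (A n) ≤ ε / 8 * (1 / 2) ^ n) : False := by
  let C : ℕ → ℕ → Set Ω := fun n m => ⋃ k ∈ Finset.Icc n m, A k
  have hCm : ∀ n m, MeasurableSet (C n m) := fun n m =>
    Finset.measurableSet_biUnion _ fun k _ => hA k
  have hCmono : ∀ n, Monotone (C n) := fun n a b hab =>
    Set.biUnion_subset_biUnion_left fun k hk => by
      simp only [SetLike.mem_coe, Finset.mem_Icc] at hk ⊢
      exact ⟨hk.1, hk.2.trans hab⟩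
  have hex : ∀ n, ∃ m, ∀ m' ≥ m, sv T (C n m' \ C n m) ≤ ε / 8 * (1 / 2) ^ n := fun n =>
    sv_cauchy hT (C n) (hCm n) (hCmono n) (by positivity)
  choose m hm using hex
  let D : ℕ → Set Ω := fun n => C n (m n)
  let E : ℕ → Set Ω := fun n => ⋂ j ∈ Finset.range (n + 1), D j
  have hDm : ∀ n, MeasurableSet (D n) := fun n => hCm _ _
  have hEm : ∀ n, MeasurableSet (E n) := fun n =>
    Finset.measurableSet_biInter _ fun k _ => hDm k
  have hEanti : Antitone E := by
    intro a b hab x hx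
    simp only [E, Set.mem_iInter, Finset.mem_range] at hx ⊢
    intro i hi
    exact hx i (by omega)
  have hAD : ∀ n j, j ≤ n → sv T (A n \ D j) ≤ ε / 8 * (1 / 2) ^ j := by
    intro n j hj
    refine (sv_mono hT ?_).trans (hm j (max n (m j)) (le_max_right _ _))
    refine Set.sdiff_subset_sdiff_left ?_
    refine Set.subset_biUnion_of_mem (u := A) (x := n) ?_
    simp [hj]
  have hAE : ∀ n, sv T (A n \ E n) ≤ ε / 4 := by
    intro n
    have h := sv_biUnion hT (Finset.range (n + 1)) (fun j => A n \ D j)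
      (fun j => (hA n).diff (hDm j)) (C := A n \ E n) (by
        rintro x ⟨hx, hxE⟩
        simp only [E, Set.mem_iInter, not_forall] at hxE
        obtain ⟨j, hj, hxj⟩ := hxE
        exact Set.mem_biUnion hj ⟨hx, hxj⟩)
    refine h.trans ?_
    calc ∑ j ∈ Finset.range (n + 1), sv T (A n \ D j)
        ≤ ∑ j ∈ Finset.range (n + 1), ε / 8 * (1 / 2) ^ j := by
          refine Finset.sum_le_sum fun j hj => hAD n j ?_
          simp at hj; omega
      _ = ε / 8 * ∑ j ∈ Finset.range (n + 1), (1 / 2) ^ j := by rw [Finset.mul_sum]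
      _ ≤ ε / 8 * 2 := by gcongr; exact sum_geometric_two_le _
      _ = ε / 4 := by ring
  have hψ : ∀ n, Bd ((φ n : X →ₗ[ℝ] ℝ) ∘ₗ T) K := fun n => hT.comp _ (hφ n)
  have hE1 : ∀ n, ε - ε / 4 ≤ sv ((φ n : X →ₗ[ℝ] ℝ) ∘ₗ T) (E n) := by
    intro n
    have a := sv_union (hψ n) (A := E n) (B := A n \ E n) (C := A n) (hEm n) (by
      intro x hx
      by_cases h : x ∈ E n
      · exact Or.inl h
      · exact Or.inr ⟨hx, h⟩)
    have b := (sv_comp_le hT (φ n) (hφ n) (A n \ E n)).trans (hAE n)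
    have c := h1 n
    linarith
  have hE2 : ∀ n, sv ((φ n : X →ₗ[ℝ] ℝ) ∘ₗ T) (E (n + 1)) ≤ ε / 4 := by
    intro n
    have a := sv_biUnion (hψ n) (Finset.Icc (n + 1) (m (n + 1))) A hA (C := E (n + 1)) (by
      intro x hx
      simp only [E, Set.mem_iInter] at hx
      exact hx (n + 1) (by simp))
    refine a.trans ?_
    calc ∑ k ∈ Finset.Icc (n + 1) (m (n + 1)), sv ((φ n : X →ₗ[ℝ] ℝ) ∘ₗ T) (A k)
        ≤ ∑ k ∈ Finset.Icc (n + 1) (m (n + 1)), ε / 8 * (1 / 2) ^ k := by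
          refine Finset.sum_le_sum fun k hk => h2 n k ?_
          simp at hk; omega
      _ ≤ ∑ k ∈ Finset.range (m (n + 1) + 1), ε / 8 * (1 / 2) ^ k := by
          refine Finset.sum_le_sum_of_subset_of_nonneg (fun k hk => ?_) fun k _ _ => by positivity
          simp at hk ⊢; omega
      _ = ε / 8 * ∑ k ∈ Finset.range (m (n + 1) + 1), (1 / 2) ^ k := by rw [Finset.mul_sum]
      _ ≤ ε / 8 * 2 := by gcongr; exact sum_geometric_two_le _
      _ = ε / 4 := by ring
  refine exhaustive hT (fun n => E n \ E (n + 1)) (fun n => (hEm _).diff (hEm _)) ?_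
    (half_pos hε) ?_
  · refine (pairwise_disjoint_on _).2 fun i j hij => ?_
    rw [Set.disjoint_left]
    rintro x ⟨-, h1⟩ ⟨h2, -⟩
    exact h1 (hEanti hij h2)
  · intro n
    have a := sv_union (hψ n) (A := E (n + 1)) (B := E n \ E (n + 1)) (C := E n) (hEm _) (by
      intro x hx
      by_cases h : x ∈ E (n + 1)
      · exact Or.inl h
      · exact Or.inr ⟨hx, h⟩)
    have b := sv_comp_le hT (φ n) (hφ n) (E n \ E (n + 1))
    have c := hE1 n
    have d := hE2 n
    linarith

end main

theorem grothendieck (l : BM Ω →ₗ[ℝ] ℝ) (hl : ∀ f : BM Ω, (∀ x, 0 ≤ f.1 x) → 0 ≤ l f)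
    {δ : ℝ} (hδ : 0 < δ) (N : ℕ) (hN : l 1 < N * δ) (ρ : (Fin N → ℝ) →ₗ[ℝ] BM Ω)
    (nn : (Fin N → ℝ) → ℝ) (hpos : ∀ a, a ≠ 0 → 0 < nn a) (hle : ∀ a x, |(ρ a).1 x| ≤ nn a) :
    ∃ a, a ≠ 0 ∧ l (ρ a * ρ a) < δ * nn a ^ 2 := by
  by_contra hcon
  push Not at hcon
  let Q : LinearMap.BilinForm ℝ (Fin N → ℝ) :=
    LinearMap.mk₂ ℝ (fun a b => l (ρ a * ρ b))
      (fun a b c => by simp [add_mul]) (fun c a b => by simp)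
      (fun a b c => by simp [mul_add]) (fun c a b => by simp)
  have hQ : ∀ a b, Q a b = l (ρ a * ρ b) := fun a b => rfl
  have hsymm : LinearMap.IsSymm Q :=
    ⟨fun a b => by simp only [hQ, RingHom.id_apply, mul_comm]⟩
  obtain ⟨v, hv⟩ := LinearMap.BilinForm.exists_orthogonal_basis (B := Q) hsymm
  have hort : ∀ i j, i ≠ j → l (ρ (v i) * ρ (v j)) = 0 := fun i j hij => hv hij
  have hqpos : ∀ i, 0 < l (ρ (v i) * ρ (v i)) := fun i => by
    have := hcon (v i) (v.ne_zero i)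
    have h2 := hpos (v i) (v.ne_zero i)
    have : 0 < δ * nn (v i) ^ 2 := by positivity
    linarith
  set q : Fin (Module.finrank ℝ (Fin N → ℝ)) → ℝ := fun i => l (ρ (v i) * ρ (v i)) with hq
  -- pointwise estimate
  have hpt : ∀ x, δ * ∑ i, (q i)⁻¹ * ((ρ (v i)).1 x) ^ 2 ≤ 1 := by
    intro x
    set s := ∑ i, (q i)⁻¹ * ((ρ (v i)).1 x) ^ 2 with hs
    have hs0 : 0 ≤ s := Finset.sum_nonneg fun i _ =>
      mul_nonneg (inv_pos.2 (hqpos i)).le (sq_nonneg _)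
    let a : Fin N → ℝ := ∑ i, ((q i)⁻¹ * (ρ (v i)).1 x) • v i
    have e1 : ρ a = ∑ i, ((q i)⁻¹ * (ρ (v i)).1 x) • ρ (v i) := by
      simp only [a, map_sum, map_smul]
    have ev : ∀ (F : Fin (Module.finrank ℝ (Fin N → ℝ)) → BM Ω),
        (∑ i, F i).1 x = ∑ i, (F i).1 x := by
      intro F
      simp
    have e2 : (ρ a).1 x = s := by
      rw [e1, ev]
      refine Finset.sum_congr rfl fun i _ => ?_
      rw [BM.smul_app]; ring
    have e3 : l (ρ a * ρ a) = s := by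
      rw [e1, Finset.sum_mul, map_sum]
      refine Finset.sum_congr rfl fun i _ => ?_
      rw [Finset.mul_sum, map_sum, Finset.sum_eq_single i]
      · rw [smul_mul_smul_comm, map_smul, smul_eq_mul]
        change _ * q i = _
        have := (hqpos i).ne'
        change q i ≠ 0 at this
        field_simp
      · intro j _ hj
        rw [smul_mul_smul_comm, map_smul, hort i j hj.symm, smul_zero]
      · simp
    by_cases ha : a = 0
    · have : s = 0 := by rw [← e2, ha, map_zero]; rfl
      rw [this]; simp
    · have h1 := hcon a ha
      have h2 := hle a x
      rw [e2, abs_of_nonneg hs0] at h2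
      rw [e3] at h1
      have h3 : δ * s ^ 2 ≤ s := by
        refine le_trans ?_ h1
        gcongr
      rcases hs0.eq_or_lt with h0 | h0
      · rw [← h0]; simp
      · have : (δ * s) * s ≤ 1 * s := by nlinarith
        exact le_of_mul_le_mul_right this h0
  have h1 := hl (1 - δ • ∑ i, (q i)⁻¹ • (ρ (v i) * ρ (v i))) (fun x => by
    have e : (∑ i, (q i)⁻¹ • (ρ (v i) * ρ (v i))).1 x = ∑ i, (q i)⁻¹ * ((ρ (v i)).1 x) ^ 2 := by
      have ev : ∀ (F : Fin (Module.finrank ℝ (Fin N → ℝ)) → BM Ω),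
        (∑ i, F i).1 x = ∑ i, (F i).1 x := by
        intro F
        simp
      rw [ev]
      refine Finset.sum_congr rfl fun i _ => ?_
      rw [BM.smul_app, BM.mul_app]; ring
    rw [BM.sub_app, BM.smul_app, BM.one_app, e]
    linarith [hpt x])
  rw [map_sub, map_smul, map_sum] at h1
  have h2 : ∑ i, l ((q i)⁻¹ • (ρ (v i) * ρ (v i))) = N := by
    have : ∀ i, l ((q i)⁻¹ • (ρ (v i) * ρ (v i))) = 1 := fun i => by
      rw [map_smul, smul_eq_mul]
      exact inv_mul_cancel₀ (hqpos i).ne'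
    simp [this]
  rw [h2, smul_eq_mul] at h1
  linarith

section main2

variable {X : Type*} [NormedAddCommGroup X] [NormedSpace ℝ X]
variable {T : BM Ω →ₗ[ℝ] X} {K : ℝ}

theorem pick (hT : Bd T K) (hK : 0 < K) {c : ℝ} (hc : 0 < c)
    (H : ∀ N : ℕ, ∃ (ρ : (Fin N → ℝ) →ₗ[ℝ] BM Ω) (nn : (Fin N → ℝ) → ℝ),
      (∀ a, a ≠ 0 → 0 < nn a) ∧ (∀ a x, |(ρ a).1 x| ≤ nn a) ∧ ∀ a, c * nn a ≤ ‖T (ρ a)‖)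
    (l : BM Ω →ₗ[ℝ] ℝ) (hl : ∀ f : BM Ω, (∀ x, 0 ≤ f.1 x) → 0 ≤ l f) {δ : ℝ} (hδ : 0 < δ) :
    ∃ (A : Set Ω) (hA : MeasurableSet A) (φ : StrongDual ℝ X), ‖φ‖ ≤ 1 ∧
      c / 2 ≤ sv ((φ : X →ₗ[ℝ] ℝ) ∘ₗ T) A ∧ l (ind A hA) ≤ δ := by
  set θ := c / (2 * K) with hθ
  have hθ0 : 0 < θ := by positivity
  have hδ' : 0 < δ * θ ^ 2 := by positivity
  obtain ⟨N, hN⟩ := exists_nat_gt (l 1 / (δ * θ ^ 2))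
  rw [div_lt_iff₀ hδ'] at hN
  obtain ⟨ρ, nn, hpos, hle, hlow⟩ := H N
  obtain ⟨a, ha, hla⟩ := grothendieck l hl hδ' N hN ρ nn hpos hle
  have hn := hpos a ha
  set y : BM Ω := (nn a)⁻¹ • ρ a with hy
  have hy1 : ∀ x, |y.1 x| ≤ 1 := fun x => by
    rw [hy, BM.smul_app, abs_mul, abs_of_pos (inv_pos.2 hn), inv_mul_le_iff₀ hn, mul_one]
    exact hle a x
  have hTy : c ≤ ‖T y‖ := by
    rw [hy, map_smul, norm_smul, Real.norm_of_nonneg (inv_pos.2 hn).le, le_inv_mul_iff₀ hn,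
      mul_comm]
    exact hlow a
  have hly : l (y * y) ≤ δ * θ ^ 2 := by
    rw [hy, smul_mul_smul_comm, map_smul, smul_eq_mul, ← mul_inv, inv_mul_le_iff₀ (by positivity)]
    nlinarith
  let A : Set Ω := {x | θ < |y.1 x|}
  have hA : MeasurableSet A := measurableSet_lt measurable_const (BM.meas y).abs
  have hyU : UB Set.univ y := ⟨hy1, fun x hx => (hx trivial).elim⟩
  have hsmall : ‖T (y * ind Aᶜ hA.compl)‖ ≤ c / 2 := by
    have e : y * ind Aᶜ hA.compl = θ • (θ⁻¹ • (y * ind Aᶜ hA.compl)) := by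
      rw [smul_smul, mul_inv_cancel₀ hθ0.ne', one_smul]
    rw [e, map_smul, norm_smul, Real.norm_of_nonneg hθ0.le]
    have := hT (θ⁻¹ • (y * ind Aᶜ hA.compl)) (fun x => by
      rw [BM.smul_app, BM.mul_app, abs_mul, abs_of_pos (inv_pos.2 hθ0), inv_mul_le_iff₀ hθ0]
      by_cases hx : x ∈ A
      · have : x ∉ Aᶜ := fun h => h hx
        rw [ind_notMem this]; simp [hθ0.le]
      · have : x ∈ Aᶜ := hx
        rw [ind_mem this, mul_one, mul_one]
        exact not_lt.1 hx)
    calc θ * _ ≤ θ * K := by gcongr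
      _ = c / 2 := by rw [hθ]; field_simp
  have hbig : c / 2 ≤ ‖T (y * ind A hA)‖ := by
    have h1 := hTy
    rw [BM.split y A hA, map_add] at h1
    have h2 := norm_add_le (T (y * ind A hA)) (T (y * ind Aᶜ hA.compl))
    linarith
  obtain ⟨φ, hφ1, hφ⟩ := exists_dual_vector'' ℝ (T (y * ind A hA))
  refine ⟨A, hA, φ, hφ1, ?_, ?_⟩
  · have := le_sv (hT.comp φ hφ1) (A := A) (hyU.mul_ind hA Set.inter_subset_right)
    refine hbig.trans (le_trans (le_of_eq ?_) this)
    change _ = ‖φ (T (y * ind A hA))‖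
    rw [hφ]
    simp
  · have h1 := hl (y * y - θ ^ 2 • ind A hA) (fun x => by
      rw [BM.sub_app, BM.smul_app, BM.mul_app]
      by_cases hx : x ∈ A
      · rw [ind_mem hx]
        have : θ < |y.1 x| := hx
        nlinarith [abs_mul_abs_self (y.1 x)]
      · rw [ind_notMem hx]
        nlinarith [mul_self_nonneg (y.1 x)])
    rw [map_sub, map_smul, smul_eq_mul] at h1
    have : l (ind A hA) * θ ^ 2 ≤ δ * θ ^ 2 := by linarith
    exact le_of_mul_le_mul_right this (by positivity)

theorem core [TopologicalSpace.SeparableSpace X] (hT : Bd T K) (hK : 0 < K) {c : ℝ} (hc : 0 < c)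
    (H : ∀ N : ℕ, ∃ (ρ : (Fin N → ℝ) →ₗ[ℝ] BM Ω) (nn : (Fin N → ℝ) → ℝ),
      (∀ a, a ≠ 0 → 0 < nn a) ∧ (∀ a x, |(ρ a).1 x| ≤ nn a) ∧ ∀ a, c * nn a ≤ ‖T (ρ a)‖) :
    False := by
  have hc2 : 0 < c / 2 := half_pos hc
  obtain ⟨f, hf, hr⟩ := exists_seq_of_forall_finset_exists
    (α := ℕ × Set Ω × StrongDual ℝ X)
    (fun p => MeasurableSet p.2.1 ∧ ‖p.2.2‖ ≤ 1 ∧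
      c / 2 ≤ sv ((p.2.2 : X →ₗ[ℝ] ℝ) ∘ₗ T) p.2.1)
    (fun p p' => p.1 < p'.1 ∧
      sv ((p.2.2 : X →ₗ[ℝ] ℝ) ∘ₗ T) p'.2.1 ≤ c / 2 / 8 * (1 / 2) ^ p'.1)
    (by
      intro s hs
      have hex : ∀ p : ℕ × Set Ω × StrongDual ℝ X, ∃ l : BM Ω →ₗ[ℝ] ℝ,
          (∀ f : BM Ω, (∀ x, 0 ≤ f.1 x) → 0 ≤ l f) ∧ (p ∈ s → 
          ∀ A (hA : MeasurableSet A), sv ((p.2.2 : X →ₗ[ℝ] ℝ) ∘ₗ T) A ≤ l (ind A hA)) := by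
        intro p
        by_cases hp : p ∈ s
        · obtain ⟨l, h1, h2⟩ := exists_pos (hT.comp p.2.2 (hs p hp).2.1)
          exact ⟨l, h1, fun _ => h2⟩
        · exact ⟨0, fun _ _ => le_rfl, fun h => (hp h).elim⟩
      choose l hl1 hl2 using hex
      let k := s.sup (fun p => p.1) + 1
      obtain ⟨A, hA, φ, hφ, h1, h2⟩ := pick hT hK hc H (∑ p ∈ s, l p) (fun f hf => by
        rw [LinearMap.sum_apply]
        exact Finset.sum_nonneg fun p _ => hl1 p f hf)
        (δ := c / 2 / 8 * (1 / 2) ^ k) (by positivity)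
      refine ⟨(k, A, φ), ⟨hA, hφ, h1⟩, fun p hp => ⟨?_, ?_⟩⟩
      · have : p.1 ≤ s.sup (fun p => p.1) := Finset.le_sup (f := fun p => p.1) hp
        exact Nat.lt_succ_of_le this
      · refine (hl2 p hp A hA).trans (le_trans ?_ h2)
        rw [LinearMap.sum_apply]
        exact Finset.single_le_sum (f := fun p => l p (ind A hA)) (fun q _ => hl1 q _ fun x => by
          by_cases hx : x ∈ A
          · rw [ind_mem hx]; simp
          · rw [ind_notMem hx]) hp)
  have hmono : StrictMono fun n => (f n).1 := fun a b hab => (hr a b hab).1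
  refine no_control hT (fun n => (f n).2.1) (fun n => (hf n).1) (fun n => (f n).2.2)
    (fun n => (hf n).2.1) hc2 (fun n => (hf n).2.2) fun k n hkn => (hr k n hkn).2.trans ?_
  refine mul_le_mul_of_nonneg_left ?_ (by positivity)
  exact pow_le_pow_of_le_one (by norm_num) (by norm_num) (hmono.le_apply)

end main2

end BMsec

theorem BM.memLp (f : BM ℝ) : MemLp f.1 ∞ μ01 := by
  obtain ⟨hf, C, hC⟩ := f.2
  exact memLp_top_of_bound hf.aestronglyMeasurable C (Filter.Eventually.of_forall hC)

/-- The quotient map from bounded measurable functions to `L_∞`. -/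
noncomputable def toL : BM ℝ →ₗ[ℝ] Lp ℝ ∞ μ01 where
  toFun f := (BM.memLp f).toLp f.1
  map_add' _ _ := rfl
  map_smul' _ _ := rfl

theorem toL_norm (f : BM ℝ) (hf : ∀ x, |f.1 x| ≤ 1) : ‖toL f‖ ≤ 1 := by
  have h := Lp.norm_le_of_ae_bound (f := toL f) (C := 1) zero_le_one (by
    filter_upwards [(BM.memLp f).coeFn_toLp] with x hx
    change ‖((BM.memLp f).toLp f.1 : ℝ → ℝ) x‖ ≤ 1
    rw [hx]
    exact hf x)
  simpa using h

theorem Linfty_ae_le (y : Lp ℝ ∞ μ01) : ∀ᵐ x ∂μ01, |y x| ≤ ‖y‖ := by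
  filter_upwards [ae_le_eLpNormEssSup (f := (y : ℝ → ℝ)) (μ := μ01)] with x hx
  rw [← eLpNorm_exponent_top] at hx
  have := ENNReal.toReal_mono (Lp.eLpNorm_ne_top y) hx
  rw [Lp.norm_def]
  simpa using this

theorem Linfty_coe_sum {ι : Type*} (s : Finset ι) (f : ι → Lp ℝ ∞ μ01) :
    ((∑ i ∈ s, f i : Lp ℝ ∞ μ01) : ℝ → ℝ) =ᵐ[μ01] ∑ i ∈ s, (f i : ℝ → ℝ) := by
  classical
  induction s using Finset.induction_on with
  | empty => simpa using Lp.coeFn_zero ℝ ∞ μ01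
  | insert a s ha ih =>
    rw [Finset.sum_insert ha, Finset.sum_insert ha]
    filter_upwards [Lp.coeFn_add (f a) (∑ i ∈ s, f i), ih] with x h1 h2
    rw [h1, Pi.add_apply, Pi.add_apply, h2]

theorem exists_lift {N : ℕ} (y : Fin N → Lp ℝ ∞ μ01) :
    ∃ ρ : (Fin N → ℝ) →ₗ[ℝ] BM ℝ, (∀ a x, |(ρ a).1 x| ≤ ‖∑ i, a i • y i‖) ∧
      ∀ a, toL (ρ a) = ∑ i, a i • y i := by
  classical
  let G : Set ℝ := ⋂ q : Fin N → ℚ, {x | |∑ i, (q i : ℝ) * y i x| ≤ ‖∑ i, (q i : ℝ) • y i‖}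
  have hym : ∀ i, Measurable (y i : ℝ → ℝ) := fun i => (Lp.stronglyMeasurable (y i)).measurable
  have hG : MeasurableSet G := MeasurableSet.iInter fun q =>
    measurableSet_le (Finset.measurable_fun_sum _ fun i _ => (hym i).const_mul _).abs
      measurable_const
  have hGae : ∀ᵐ x ∂μ01, x ∈ G := by
    simp only [G, Set.mem_iInter, Set.mem_ofPred_eq]
    rw [ae_all_iff]
    intro q
    have h1 : (((∑ i, (q i : ℝ) • y i : Lp ℝ ∞ μ01)) : ℝ → ℝ) =ᵐ[μ01]
        ∑ i, ((((q i : ℝ) • y i : Lp ℝ ∞ μ01)) : ℝ → ℝ) := Linfty_coe_sum _ _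
    have h2 : ∀ᵐ x ∂μ01, ∀ i, (((q i : ℝ) • y i : Lp ℝ ∞ μ01) : ℝ → ℝ) x = (q i : ℝ) * y i x := by
      rw [ae_all_iff]
      intro i
      filter_upwards [Lp.coeFn_smul (q i : ℝ) (y i)] with x hx
      rw [hx]; rfl
    filter_upwards [h1, h2, Linfty_ae_le (∑ i, (q i : ℝ) • y i)] with x a b c
    rw [a, Finset.sum_apply] at c
    simpa only [b] using c
  have hGall : ∀ x ∈ G, ∀ a : Fin N → ℝ, |∑ i, a i * y i x| ≤ ‖∑ i, a i • y i‖ := by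
    intro x hx a
    have hd : DenseRange (fun q : Fin N → ℚ => fun i => (q i : ℝ)) :=
      DenseRange.piMap fun _ => Rat.denseRange_cast
    refine hd.induction_on (p := fun a : Fin N → ℝ => |∑ i, a i * y i x| ≤ ‖∑ i, a i • y i‖)
      a ?_ ?_
    · exact isClosed_le (by fun_prop) (by fun_prop)
    · intro q
      exact Set.mem_iInter.1 hx q
  let r : (Fin N → ℝ) → ℝ → ℝ := fun a => G.indicator fun x => ∑ i, a i * y i x
  have hr : ∀ a x, |r a x| ≤ ‖∑ i, a i • y i‖ := by
    intro a x
    by_cases hx : x ∈ G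
    · simp only [r, Set.indicator_of_mem hx]
      exact hGall x hx a
    · simp [r, Set.indicator_of_notMem hx]
  have hrm : ∀ a, Measurable (r a) := fun a =>
    (Finset.measurable_fun_sum _ fun i _ => (hym i).const_mul _).indicator hG
  let ρ : (Fin N → ℝ) →ₗ[ℝ] BM ℝ :=
    { toFun := fun a => ⟨r a, hrm a, _, hr a⟩
      map_add' := fun a b => BM.ext fun x => by
        rw [BM.add_app]
        by_cases hx : x ∈ G
        · simp [r, Set.indicator_of_mem hx, add_mul, Finset.sum_add_distrib]
        · simp [r, Set.indicator_of_notMem hx]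
      map_smul' := fun c a => BM.ext fun x => by
        rw [RingHom.id_apply, BM.smul_app]
        by_cases hx : x ∈ G
        · simp [r, Set.indicator_of_mem hx, Finset.mul_sum, mul_assoc]
        · simp [r, Set.indicator_of_notMem hx] }
  refine ⟨ρ, hr, fun a => ?_⟩
  have h1 : (((∑ i, a i • y i : Lp ℝ ∞ μ01)) : ℝ → ℝ) =ᵐ[μ01]
      ∑ i, (((a i • y i : Lp ℝ ∞ μ01)) : ℝ → ℝ) := Linfty_coe_sum _ _
  have h2 : ∀ᵐ x ∂μ01, ∀ i, ((a i • y i : Lp ℝ ∞ μ01) : ℝ → ℝ) x = a i * y i x := by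
    rw [ae_all_iff]
    intro i
    filter_upwards [Lp.coeFn_smul (a i) (y i)] with x hx
    rw [hx]; rfl
  apply Lp.ext
  have h3 : (toL (ρ a) : ℝ → ℝ) =ᵐ[μ01] r a := (BM.memLp (ρ a)).coeFn_toLp
  filter_upwards [h1, h2, h3, hGae] with x a1 b c hx
  rw [a1, c, Finset.sum_apply]
  simp only [b, r, Set.indicator_of_mem hx]

/-- Every bounded operator from `L_∞[0,1]` into a separable Banach
space is strictly singular. -/
theorem statement6 {X : Type*} [NormedAddCommGroup X] [NormedSpace ℝ X] [CompleteSpace X]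
    [TopologicalSpace.SeparableSpace X]
    (T : Lp ℝ ∞ μ01 →L[ℝ] X) :
    StrictlySingular T := by
  rintro Y - hY ⟨c, hc, hlow⟩
  refine core (Ω := ℝ) (T := (T : Lp ℝ ∞ μ01 →ₗ[ℝ] X) ∘ₗ toL) (K := ‖T‖ + 1) ?_
    (by positivity) hc ?_
  · intro g hg
    change ‖T (toL g)‖ ≤ _
    refine (T.le_opNorm _).trans ?_
    have := toL_norm g hg
    nlinarith [norm_nonneg T, norm_nonneg (toL g)]
  · intro N
    have hinf : Infinite (Module.Basis.ofVectorSpaceIndex ℝ Y) := by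
      by_contra h
      rw [not_infinite_iff_finite] at h
      exact hY (Module.Finite.of_basis (Module.Basis.ofVectorSpace ℝ Y))
    let b := Module.Basis.ofVectorSpace ℝ Y
    let e : Fin N ↪ Module.Basis.ofVectorSpaceIndex ℝ Y :=
      Fin.valEmbedding.trans (Infinite.natEmbedding _)
    let y : Fin N → Lp ℝ ∞ μ01 := fun i => ((b (e i) : Y) : Lp ℝ ∞ μ01)
    have hli : LinearIndependent ℝ y :=
      (b.linearIndependent.comp e e.injective).map' Y.subtype (Submodule.ker_subtype Y)
    obtain ⟨ρ, h1, h2⟩ := exists_lift y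
    refine ⟨ρ, fun a => ‖∑ i, a i • y i‖, fun a ha => ?_, h1, fun a => ?_⟩
    · rw [norm_pos_iff]
      intro h0
      exact ha (funext fun i => Fintype.linearIndependent_iff.1 hli a h0 i)
    · change _ ≤ ‖T (toL (ρ a))‖
      rw [h2]
      exact hlow _ (Y.sum_mem fun i _ => Y.smul_mem _ (b (e i)).2)
end

section
/- Let X be a Banach space with cotype q ∈ [2, ∞). There is a constant K (depending only on X and q) such that for every bounded operator T: L_∞[0,1] → X and every n, the n-th Bernstein number satisfies b_n(T) ≤ K ‖T‖ n^{-1/q}. In particular every bounded operator from L_∞ into a space of finite cotype is super strictly singular. -/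
open MeasureTheory ENNReal Filter Set Finset

/-- The `n`-th Bernstein number of an operator:
`b_n(T) = sup { inf { ‖Tx‖/‖x‖ : 0 ≠ x ∈ F } : F ⊆ E, dim F = n }`. -/
noncomputable def bernsteinNumber {E X : Type*} [NormedAddCommGroup E] [NormedSpace ℝ E]
    [NormedAddCommGroup X] [NormedSpace ℝ X] (T : E →L[ℝ] X) (n : ℕ) : ℝ :=
  sSup {r : ℝ | ∃ F : Submodule ℝ E, Module.finrank ℝ F = n ∧
    r = sInf {s : ℝ | ∃ x ∈ F, x ≠ 0 ∧ s = ‖T x‖ / ‖x‖}}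

/-- An operator is super strictly singular iff its Bernstein numbers tend to zero. -/
noncomputable def SuperStrictlySingular {E X : Type*} [NormedAddCommGroup E]
    [NormedSpace ℝ E] [NormedAddCommGroup X] [NormedSpace ℝ X] (T : E →L[ℝ] X) : Prop :=
  Tendsto (fun n => bernsteinNumber T n) atTop (nhds 0)

/-- `X` has cotype `q` with constant `C`, where the Rademacher average is expressed as an
average over all choices of signs. -/
def HasCotype (q : ℝ) (C : ℝ) (X : Type*) [NormedAddCommGroup X] [NormedSpace ℝ X] : Prop :=
  ∀ (m : ℕ) (x : Fin m → X),
    (∑ i, ‖x i‖ ^ q) ^ (1 / q) ≤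
      C * (((2 : ℝ) ^ m)⁻¹ *
        ∑ ε : Fin m → Bool, ‖∑ i, (if ε i then (1:ℝ) else -1) • x i‖ ^ 2) ^ ((1:ℝ) / 2)

section summing
variable {Ω X : Type*} [MeasurableSpace Ω] [NormedAddCommGroup X] [NormedSpace ℝ X]

/-- `S` is bounded by `L` on bounded measurable functions. -/
def SBound (S : (Ω → ℝ) →ₗ[ℝ] X) (L : ℝ) : Prop :=
  ∀ (f : Ω → ℝ) (M : ℝ), 0 ≤ M → Measurable f → (∀ t, |f t| ≤ M) → ‖S f‖ ≤ L * M

/-- the values of the `(q,1)`-sums. -/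
def sumSet (q : ℝ) (S : (Ω → ℝ) →ₗ[ℝ] X) : Set ℝ :=
  {a | ∃ (m : ℕ) (f : Fin m → Ω → ℝ), (∀ i, Measurable (f i)) ∧ (∀ t, ∑ i, |f i t| ≤ 1) ∧
    a = ∑ i, ‖S (f i)‖ ^ q}

lemma sumSet_le {q C L : ℝ} (hq : 2 ≤ q) (hC : 0 < C) (hL : 0 ≤ L) (hcot : HasCotype q C X)
    {S : (Ω → ℝ) →ₗ[ℝ] X} (hS : SBound S L) : ∀ a ∈ sumSet q S, a ≤ (C * L) ^ q := by
  rintro a ⟨m, f, hf, hsum, rfl⟩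
  have h := hcot m (fun i => S (f i))
  have hq0 : 0 < q := by linarith
  have hb : ∀ ε : Fin m → Bool, ‖∑ i, (if ε i then (1:ℝ) else -1) • S (f i)‖ ^ 2 ≤ L ^ 2 := by
    intro ε
    gcongr
    have : ∑ i, (if ε i then (1:ℝ) else -1) • S (f i)
        = S (∑ i, (if ε i then (1:ℝ) else -1) • f i) := by simp only [map_sum, map_smul]
    rw [this]
    have h2 := hS (∑ i, (if ε i then (1:ℝ) else -1) • f i) 1 (by norm_num)
      (by
        have : (∑ i, (if ε i then (1:ℝ) else -1) • f i)
          = fun t => ∑ i, (if ε i then (1:ℝ) else -1) * f i t := by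
            ext t; simp only [Finset.sum_apply, Pi.smul_apply, smul_eq_mul]
        rw [this]
        exact Finset.measurable_sum _ (fun i _ => (hf i).const_mul _)) ?_
    · simpa using h2
    · intro t
      refine le_trans ?_ (hsum t)
      rw [Finset.sum_apply]
      refine (Finset.abs_sum_le_sum_abs _ _).trans (Finset.sum_le_sum fun i _ => ?_)
      simp only [Pi.smul_apply, smul_eq_mul, abs_mul]
      split_ifs <;> simp
  have hE : (((2 : ℝ) ^ m)⁻¹ *
        ∑ ε : Fin m → Bool, ‖∑ i, (if ε i then (1:ℝ) else -1) • S (f i)‖ ^ 2) ≤ L ^ 2 := by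
    have h3 := Finset.sum_le_sum (s := Finset.univ) (fun ε _ => hb ε)
    simp only [Finset.sum_const, Finset.card_univ, Fintype.card_fun, Fintype.card_bool,
      Fintype.card_fin, nsmul_eq_mul] at h3
    rw [inv_mul_le_iff₀ (by positivity)]
    push_cast at h3
    exact h3
  have hE2 : (((2 : ℝ) ^ m)⁻¹ *
        ∑ ε : Fin m → Bool, ‖∑ i, (if ε i then (1:ℝ) else -1) • S (f i)‖ ^ 2) ^ ((1:ℝ)/2) ≤ L := by
    refine (Real.rpow_le_rpow (by positivity) hE (by norm_num)).trans ?_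
    rw [← Real.sqrt_eq_rpow, Real.sqrt_sq hL]
  have h4 : (∑ i, ‖S (f i)‖ ^ q) ^ (1 / q) ≤ C * L :=
    h.trans (by gcongr)
  have h5 := Real.rpow_le_rpow (by positivity) h4 hq0.le
  rwa [← Real.rpow_mul (by positivity), one_div_mul_cancel hq0.ne', Real.rpow_one] at h5

lemma key_avg {q C L : ℝ} (hq : 2 ≤ q) (hC : 0 < C) (hL : 0 ≤ L) (hcot : HasCotype q C X)
    {S : (Ω → ℝ) →ₗ[ℝ] X} (hS : SBound S L) {ι : Type*} [Fintype ι] (p : ι → ℝ)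
    (hp : ∀ i, 0 ≤ p i) (hp1 : ∑ i, p i = 1) (h : ι → Ω → ℝ) (hm : ∀ i, Measurable (h i))
    (h1 : ∀ i t, |h i t| ≤ 1) (τ : ℝ) (hτ : 0 < τ) (hτs : ∀ t, ∑ i, p i * |h i t| ≤ τ) :
    ∑ i, p i * ‖S (h i)‖ ^ q ≤ q * τ * (C * L) ^ q := by
  have hq0 : 0 < q := by linarith
  set A := sSup (sumSet q S) with hA
  have hbdd : BddAbove (sumSet q S) := ⟨_, sumSet_le hq hC hL hcot hS⟩
  have hne : (sumSet q S).Nonempty := ⟨_, 0, fun i => 0, fun i => i.elim0, by simp, rfl⟩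
  have hAle : A ≤ (C * L) ^ q := csSup_le hne (sumSet_le hq hC hL hcot hS)
  have hmem : ∀ (m : ℕ) (f : Fin m → Ω → ℝ), (∀ i, Measurable (f i)) →
      (∀ t, ∑ i, |f i t| ≤ 1) → ∑ i, ‖S (f i)‖ ^ q ≤ A :=
    fun m f hf hs => le_csSup hbdd ⟨m, f, hf, hs, rfl⟩
  have hA0 : 0 ≤ A := by simpa using hmem 0 (fun i => 0) (fun i => i.elim0) (by simp)
  suffices H : ∑ i, p i * ‖S (h i)‖ ^ q ≤ q * τ * A from H.trans (by gcongr)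
  set P := ∑ i, p i * ‖S (h i)‖ ^ q with hP
  have hPA : P ≤ A := by
    calc P ≤ ∑ i, p i * A := by
          refine Finset.sum_le_sum fun i _ => mul_le_mul_of_nonneg_left ?_ (hp i)
          simpa using hmem 1 (fun _ => h i) (fun _ => hm i) (by simpa using h1 i)
      _ = A := by rw [← Finset.sum_mul, hp1, one_mul]
  rcases le_or_gt 1 τ with h1τ | hτ1
  · refine hPA.trans ?_
    have : 1 ≤ q * τ := by nlinarith
    nlinarith
  set Hf : Ω → ℝ := fun t => ∑ i, p i * |h i t| with hHf
  have hHm : Measurable Hf := Finset.measurable_sum _ fun i _ => ((hm i).abs).const_mul _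
  have hH0 : ∀ t, 0 ≤ Hf t := fun t => Finset.sum_nonneg fun i _ => mul_nonneg (hp i) (abs_nonneg _)
  have main : ∀ a ∈ sumSet q S, a ≤ (τ * A ^ (1/q) + (A - P) ^ (1/q)) ^ q := by
    rintro a ⟨m, f, hf, hs, rfl⟩
    -- the part `f H`
    have e1 : ∑ i, ‖S (fun t => f i t * Hf t)‖ ^ q ≤ τ ^ q * A := by
      have := hmem m (fun i => τ⁻¹ • fun t => f i t * Hf t)
        (fun i => ((hf i).mul hHm).const_smul _) (fun t => by
          simp only [Pi.smul_apply, smul_eq_mul, abs_mul, abs_inv, abs_of_pos hτ, abs_of_nonneg (hH0 t)]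
          rw [← Finset.mul_sum, ← Finset.sum_mul, inv_mul_le_iff₀ hτ]
          have := mul_le_mul (hs t) (hτs t) (hH0 t) zero_le_one
          simpa using this)
      simp only [map_smul, norm_smul, norm_inv, Real.norm_eq_abs, abs_of_pos hτ] at this
      simp only [Real.mul_rpow (inv_nonneg.2 hτ.le) (norm_nonneg _), ← Finset.mul_sum,
        Real.inv_rpow hτ.le] at this
      rwa [inv_mul_le_iff₀ (by positivity)] at this
    -- the part `f (1-H)`
    have e2 : ∑ i, ‖S (fun t => f i t * (1 - Hf t))‖ ^ q ≤ A - P := by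
      have j1 : ∀ i, ‖S (fun t => f i t * (1 - Hf t))‖ ^ q
          ≤ ∑ l, p l * ‖S (fun t => f i t * (1 - |h l t|))‖ ^ q := by
        intro i
        have : (fun t => f i t * (1 - Hf t)) = ∑ l, p l • (fun t => f i t * (1 - |h l t|)) := by
          ext t
          simp only [Finset.sum_apply, Pi.smul_apply, smul_eq_mul, hHf]
          calc _ = f i t * (∑ l, p l - ∑ l, p l * |h l t|) := by rw [hp1]
            _ = _ := by
              rw [← Finset.sum_sub_distrib, Finset.mul_sum]
              exact Finset.sum_congr rfl fun l _ => by ring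
        rw [this, map_sum]
        refine le_trans (Real.rpow_le_rpow (norm_nonneg _) (norm_sum_le _ _) hq0.le) ?_
        simp only [map_smul, norm_smul, Real.norm_eq_abs, abs_of_nonneg (hp _)]
        exact Real.rpow_arith_mean_le_arith_mean_rpow _ _ _ (fun l _ => hp l) hp1
          (fun l _ => norm_nonneg _) (by linarith)
      have j2 : ∀ l, ‖S (h l)‖ ^ q + ∑ i, ‖S (fun t => f i t * (1 - |h l t|))‖ ^ q ≤ A := by
        intro l
        have := hmem (m+1) (Fin.cons (h l) (fun i => fun t => f i t * (1 - |h l t|)))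
          (fun i => by
            refine Fin.cases ?_ (fun i => ?_) i
            · simpa using hm l
            · simp only [Fin.cons_succ]
              exact (hf i).mul (measurable_const.sub (hm l).abs))
          (fun t => by
            rw [Fin.sum_univ_succ]
            simp only [Fin.cons_zero, Fin.cons_succ, abs_mul]
            have h0 : 0 ≤ 1 - |h l t| := by linarith [h1 l t]
            rw [← Finset.sum_mul, abs_of_nonneg h0]
            nlinarith [hs t])
        rw [Fin.sum_univ_succ] at this
        simpa using this
      have j3 : ∑ l, p l * (‖S (h l)‖ ^ q + ∑ i, ‖S (fun t => f i t * (1 - |h l t|))‖ ^ q) ≤ A := by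
        calc _ ≤ ∑ l, p l * A := Finset.sum_le_sum fun l _ => mul_le_mul_of_nonneg_left (j2 l) (hp l)
          _ = A := by rw [← Finset.sum_mul, hp1, one_mul]
      simp only [mul_add, Finset.sum_add_distrib] at j3
      have j4 : ∑ i, ‖S (fun t => f i t * (1 - Hf t))‖ ^ q
          ≤ ∑ l, p l * ∑ i, ‖S (fun t => f i t * (1 - |h l t|))‖ ^ q := by
        simp only [Finset.mul_sum]
        rw [Finset.sum_comm]
        exact Finset.sum_le_sum fun i _ => j1 i
      linarith
    have e3 : (∑ i, ‖S (f i)‖ ^ q) ^ (1/q) ≤ τ * A ^ (1/q) + (A - P) ^ (1/q) := by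
      have t1 : (∑ i, ‖S (f i)‖ ^ q) ≤ ∑ i, (‖S (fun t => f i t * Hf t)‖
          + ‖S (fun t => f i t * (1 - Hf t))‖) ^ q := by
        refine Finset.sum_le_sum fun i _ => Real.rpow_le_rpow (norm_nonneg _) ?_ hq0.le
        refine le_trans (le_of_eq ?_) (norm_add_le _ _)
        rw [← map_add]
        congr 2
        ext t
        simp only [Pi.add_apply]; ring
      have t2 := Real.Lp_add_le_of_nonneg (s := Finset.univ) (p := q) (by linarith : (1:ℝ) ≤ q)
        (f := fun i => ‖S (fun t => f i t * Hf t)‖)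
        (g := fun i => ‖S (fun t => f i t * (1 - Hf t))‖)
        (fun i _ => norm_nonneg _) (fun i _ => norm_nonneg _)
      refine (Real.rpow_le_rpow (by positivity) t1 (by positivity)).trans (t2.trans ?_)
      have t3 := Real.rpow_le_rpow (by positivity) e1 (by positivity : 0 ≤ 1/q)
      rw [Real.mul_rpow (by positivity) hA0, ← Real.rpow_mul hτ.le, mul_one_div_cancel hq0.ne',
        Real.rpow_one] at t3
      exact add_le_add t3 (Real.rpow_le_rpow (by positivity) e2 (by positivity))
    have h5 := Real.rpow_le_rpow (by positivity) e3 hq0.le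
    rwa [← Real.rpow_mul (by positivity), one_div_mul_cancel hq0.ne', Real.rpow_one] at h5
  have hfin : A ≤ (τ * A ^ (1/q) + (A - P) ^ (1/q)) ^ q := csSup_le hne main
  have hAP : 0 ≤ A - P := by linarith
  have h6 := Real.rpow_le_rpow hA0 hfin (by positivity : 0 ≤ 1/q)
  rw [← Real.rpow_mul (by positivity), mul_one_div_cancel hq0.ne', Real.rpow_one] at h6
  have h7 : (1 - τ) * A ^ (1/q) ≤ (A - P) ^ (1/q) := by linarith
  have h8 := Real.rpow_le_rpow (mul_nonneg (by linarith) (by positivity)) h7 hq0.le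
  rw [Real.mul_rpow (by linarith) (by positivity), ← Real.rpow_mul hA0, ← Real.rpow_mul hAP,
    one_div_mul_cancel hq0.ne', Real.rpow_one, Real.rpow_one] at h8
  have h9 := one_add_mul_self_le_rpow_one_add (s := -τ) (by linarith) (by linarith : 1 ≤ q)
  have h10 : (1 + q * (-τ)) * A ≤ (1 - τ) ^ q * A := by
    rw [sub_eq_add_neg]; gcongr
  linarith

/-- unit slices -/
noncomputable def clip (j : ℕ) (s : ℝ) : ℝ := max (-(j:ℝ)) (min s j)

lemma clip_slice_le_one (j : ℕ) (s : ℝ) : |clip (j+1) s - clip j s| ≤ 1 := by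
  have hj : (0:ℝ) ≤ j := Nat.cast_nonneg j
  unfold clip
  push_cast
  rcases max_cases (-((j:ℝ)+1)) (min s (j+1)) with h | h <;>
  rcases max_cases (-(j:ℝ)) (min s j) with h' | h' <;>
  rcases min_cases s ((j:ℝ)+1) with h2 | h2 <;>
  rcases min_cases s (j:ℝ) with h3 | h3 <;>
  rw [abs_le] <;> constructor <;> linarith

lemma clip_slice_eq_zero (j : ℕ) (s : ℝ) (h : |s| ≤ j) : clip (j+1) s - clip j s = 0 := by
  obtain ⟨h1, h2⟩ := abs_le.1 h
  unfold clip
  push_cast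
  rw [min_eq_left h2, min_eq_left (by linarith), max_eq_right h1, max_eq_right (by linarith), sub_self]

lemma clip_slice_exp (j : ℕ) (s : ℝ) :
    |clip (j+1) s - clip j s| ≤ Real.exp (-j) * (Real.exp s + Real.exp (-s)) := by
  rcases le_or_gt |s| j with h | h
  · rw [clip_slice_eq_zero j s h]; simp; positivity
  · refine (clip_slice_le_one j s).trans ?_
    have h1 : Real.exp |s| ≤ Real.exp s + Real.exp (-s) := by
      rcases abs_cases s with h | h <;> rw [h.1] <;> linarith [Real.exp_pos s, Real.exp_pos (-s)]
    calc (1:ℝ) ≤ Real.exp (-j) * Real.exp |s| := by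
          rw [← Real.exp_add]; exact Real.one_le_exp (by linarith)
      _ ≤ _ := by gcongr

lemma clip_zero (s : ℝ) : clip 0 s = 0 := by
  unfold clip; simp

lemma clip_eq (j : ℕ) (s : ℝ) (h : |s| ≤ j) : clip j s = s := by
  obtain ⟨h1, h2⟩ := abs_le.1 h
  unfold clip
  rw [min_eq_left h2, max_eq_right h1]

lemma measurable_clip (j : ℕ) : Measurable (clip j) := by
  unfold clip; fun_prop

/-- sign -/
def sg (b : Bool) : ℝ := if b then 1 else -1

lemma exp_avg (k : ℕ) (a : Fin k → ℝ) (ha : ∑ i, a i ^ 2 ≤ 1) :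
    ((2:ℝ) ^ k)⁻¹ * ∑ ε : Fin k → Bool, Real.exp (∑ i, sg (ε i) * a i) ≤ 2 := by
  have h1 : ∑ ε : Fin k → Bool, Real.exp (∑ i, sg (ε i) * a i) = ∏ i, (2 * Real.cosh (a i)) := by
    simp only [Real.exp_sum]
    have := Finset.prod_univ_sum (fun _ : Fin k => (Finset.univ : Finset Bool))
      (fun i b => Real.exp (sg b * a i))
    rw [Fintype.piFinset_univ] at this
    rw [← this]
    refine Finset.prod_congr rfl fun i _ => ?_
    rw [Real.cosh_eq]; simp [sg]; ring
  rw [h1, Finset.prod_mul_distrib]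
  simp only [Finset.prod_const, Finset.card_univ, Fintype.card_fin]
  rw [inv_mul_cancel_left₀ (by positivity)]
  calc ∏ i, Real.cosh (a i) ≤ ∏ i, Real.exp (a i ^ 2 / 2) :=
        Finset.prod_le_prod (fun i _ => (Real.cosh_pos _).le) fun i _ => Real.cosh_le_exp_half_sq _
    _ = Real.exp ((∑ i, a i ^ 2) / 2) := by rw [← Real.exp_sum, Finset.sum_div]
    _ ≤ Real.exp (1/2) := by gcongr
    _ ≤ 2 := by
      have h := Real.exp_one_lt_d9
      have h2 : Real.exp (1/2) * Real.exp (1/2) = Real.exp 1 := by rw [← Real.exp_add]; norm_num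
      nlinarith [Real.exp_pos (1/2)]

/-- the constant -/
noncomputable def DD (q : ℝ) : ℝ := (4 * q) ^ (1/q) * (1 - Real.exp (-(1/q)))⁻¹

lemma DD_pos {q : ℝ} (hq : 2 ≤ q) : 0 < DD q := by
  have : Real.exp (-(1/q)) < 1 := Real.exp_lt_one_iff.2 (by
    have : 0 < 1/q := by positivity
    linarith)
  have h2 : 0 < 1 - Real.exp (-(1/q)) := by linarith
  unfold DD; positivity

lemma rad_avg {q C L : ℝ} (hq : 2 ≤ q) (hC : 0 < C) (hL : 0 ≤ L) (hcot : HasCotype q C X)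
    {S : (Ω → ℝ) →ₗ[ℝ] X} (hS : SBound S L) (k : ℕ) (x : Fin k → Ω → ℝ)
    (hx : ∀ i, Measurable (x i)) (hs : ∀ t, ∑ i, x i t ^ 2 ≤ 1) :
    (((2 : ℝ) ^ k)⁻¹ * ∑ ε : Fin k → Bool, ‖∑ i, sg (ε i) • S (x i)‖ ^ q) ^ (1/q)
      ≤ DD q * (C * L) := by
  have hq0 : 0 < q := by linarith
  set f : (Fin k → Bool) → Ω → ℝ := fun ε t => ∑ i, sg (ε i) * x i t with hf
  have hfm : ∀ ε, Measurable (f ε) := fun ε =>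
    Finset.measurable_sum _ fun i _ => (hx i).const_mul _
  have hSf : ∀ ε : Fin k → Bool, ∑ i, sg (ε i) • S (x i) = S (f ε) := by
    intro ε
    have : f ε = ∑ i, sg (ε i) • x i := by ext t; simp [hf, Finset.sum_apply]
    rw [this]; simp [map_sum]
  have hx1 : ∀ i t, |x i t| ≤ 1 := by
    intro i t
    rw [← sq_le_one_iff_abs_le_one]
    exact (Finset.single_le_sum (f := fun i => x i t ^ 2) (fun i _ => sq_nonneg _) (Finset.mem_univ i)).trans (hs t)
  have hfb : ∀ ε t, |f ε t| ≤ k := by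
    intro ε t
    refine (Finset.abs_sum_le_sum_abs _ _).trans ?_
    calc _ ≤ ∑ i : Fin k, (1:ℝ) := Finset.sum_le_sum fun i _ => by
          rw [abs_mul]
          have : |sg (ε i)| = 1 := by unfold sg; split_ifs <;> simp
          rw [this, one_mul]; exact hx1 i t
      _ = k := by simp
  set p : ℝ := ((2:ℝ) ^ k)⁻¹ with hp
  have hp0 : 0 < p := by positivity
  have hp1 : ∑ ε : Fin k → Bool, p = 1 := by
    simp [hp]
  -- slices
  have hslice : ∀ j : ℕ, (∑ ε : Fin k → Bool, p * ‖S (fun t => clip (j+1) (f ε t) - clip j (f ε t))‖ ^ q)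
      ≤ q * (4 * Real.exp (-j)) * (C * L) ^ q := by
    intro j
    refine key_avg hq hC hL hcot hS (fun _ => p) (fun _ => hp0.le) hp1 _
      (fun ε => ((measurable_clip _).comp (hfm ε)).sub ((measurable_clip _).comp (hfm ε)))
      (fun ε t => clip_slice_le_one _ _) _ (by positivity) ?_
    intro t
    have b1 := exp_avg k (fun i => x i t) (hs t)
    have b2 := exp_avg k (fun i => - x i t) (by simpa using hs t)
    simp only [mul_neg, Finset.sum_neg_distrib] at b2
    rw [← Finset.mul_sum]
    calc _ ≤ p * ∑ ε, Real.exp (-j) * (Real.exp (f ε t) + Real.exp (-f ε t)) := by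
          gcongr with ε; exact clip_slice_exp j (f ε t)
      _ = Real.exp (-j) * (p * ∑ ε, Real.exp (f ε t) + p * ∑ ε, Real.exp (-f ε t)) := by
          rw [← Finset.mul_sum, Finset.sum_add_distrib]; ring
      _ ≤ Real.exp (-j) * (2 + 2) := by gcongr
      _ = _ := by ring
  have hslice2 : ∀ j : ℕ, (∑ ε : Fin k → Bool, p * ‖S (fun t => clip (j+1) (f ε t) - clip j (f ε t))‖ ^ q) ^ (1/q)
      ≤ (4 * q) ^ (1/q) * (C * L) * Real.exp (-(1/q)) ^ j := by
    intro j
    refine (Real.rpow_le_rpow (by positivity) (hslice j) (by positivity)).trans (le_of_eq ?_)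
    rw [Real.mul_rpow (by positivity) (by positivity), ← Real.rpow_mul (by positivity),
      mul_one_div_cancel hq0.ne', Real.rpow_one, ← mul_assoc q 4, mul_comm q 4,
      Real.mul_rpow (by positivity) (by positivity), ← Real.exp_mul, ← Real.exp_nat_mul]
    have : (-(j:ℝ) * (1/q)) = j * -(1/q) := by ring
    rw [this]; ring
  have hpart : ∀ N : ℕ, (∑ ε : Fin k → Bool, p * ‖S (fun t => clip N (f ε t))‖ ^ q) ^ (1/q)
      ≤ ∑ j ∈ Finset.range N, (4 * q) ^ (1/q) * (C * L) * Real.exp (-(1/q)) ^ j := by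
    intro N
    induction N with
    | zero =>
      simp only [clip_zero, Finset.range_zero, Finset.sum_empty]
      have : S (fun _ => (0:ℝ)) = 0 := map_zero S
      rw [this]; simp [Real.zero_rpow hq0.ne', Real.zero_rpow (inv_pos.2 hq0).ne']
    | succ N ih =>
      rw [Finset.sum_range_succ]
      refine le_trans ?_ (add_le_add ih (hslice2 N))
      have t2 := Real.Lp_add_le_of_nonneg (s := Finset.univ) (p := q) (by linarith : (1:ℝ) ≤ q)
        (f := fun ε => p ^ (1/q) * ‖S (fun t => clip N (f ε t))‖)
        (g := fun ε => p ^ (1/q) * ‖S (fun t => clip (N+1) (f ε t) - clip N (f ε t))‖)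
        (fun i _ => by positivity) (fun i _ => by positivity)
      have hpq : ∀ r : ℝ, 0 ≤ r → (p ^ (1/q) * r) ^ q = p * r ^ q := by
        intro r hr
        rw [Real.mul_rpow (by positivity) hr, ← Real.rpow_mul hp0.le, one_div_mul_cancel hq0.ne',
          Real.rpow_one]
      simp only [← mul_add] at t2
      simp only [hpq _ (norm_nonneg _), hpq _ (add_nonneg (norm_nonneg _) (norm_nonneg _))] at t2
      refine le_trans (Real.rpow_le_rpow (by positivity) ?_ (by positivity)) t2
      refine Finset.sum_le_sum fun ε _ => mul_le_mul_of_nonneg_left ?_ hp0.le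
      refine Real.rpow_le_rpow (norm_nonneg _) ?_ hq0.le
      refine le_trans (le_of_eq ?_) (norm_add_le _ _)
      rw [← map_add]
      congr 2
      ext t
      simp only [Pi.add_apply]; ring
  have hk := hpart k
  have hclip : ∀ ε, (fun t => clip k (f ε t)) = f ε := fun ε => funext fun t => clip_eq k _ (hfb ε t)
  simp only [hclip] at hk
  simp only [hSf]
  rw [Finset.mul_sum]
  refine hk.trans ?_
  rw [← Finset.mul_sum]
  have hr1 : Real.exp (-(1/q)) < 1 := Real.exp_lt_one_iff.2 (by
    have : 0 < 1/q := by positivity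
    linarith)
  have hgeo : ∑ j ∈ Finset.range k, Real.exp (-(1/q)) ^ j ≤ (1 - Real.exp (-(1/q)))⁻¹ := by
    rw [← tsum_geometric_of_lt_one (Real.exp_pos _).le hr1]
    exact (summable_geometric_of_lt_one (Real.exp_pos _).le hr1).sum_le_tsum _
      (fun i _ => by positivity)
  calc _ ≤ (4 * q) ^ (1/q) * (C * L) * (1 - Real.exp (-(1/q)))⁻¹ := by gcongr
    _ = _ := by unfold DD; ring

lemma q2_summing {q C L : ℝ} (hq : 2 ≤ q) (hC : 0 < C) (hL : 0 ≤ L) (hcot : HasCotype q C X)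
    {S : (Ω → ℝ) →ₗ[ℝ] X} (hS : SBound S L) (k : ℕ) (x : Fin k → Ω → ℝ)
    (hx : ∀ i, Measurable (x i)) (hs : ∀ t, ∑ i, x i t ^ 2 ≤ 1) :
    (∑ i, ‖S (x i)‖ ^ q) ^ (1/q) ≤ C * (DD q * (C * L)) := by
  have hq0 : 0 < q := by linarith
  refine (hcot k (fun i => S (x i))).trans ?_
  gcongr
  refine le_trans ?_ (rad_avg hq hC hL hcot hS k x hx hs)
  change (_ * ∑ ε : Fin k → Bool, ‖∑ i, sg (ε i) • S (x i)‖ ^ 2) ^ _ ≤ _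
  set p : ℝ := ((2:ℝ) ^ k)⁻¹ with hp
  have hp0 : 0 < p := by positivity
  have hp1 : ∑ ε : Fin k → Bool, p = 1 := by simp [hp]
  rw [Finset.mul_sum, Finset.mul_sum]
  have := Real.rpow_arith_mean_le_arith_mean_rpow (Finset.univ : Finset (Fin k → Bool))
    (fun _ => p) (fun ε => ‖∑ i, sg (ε i) • S (x i)‖ ^ 2) (fun _ _ => hp0.le) hp1
    (fun _ _ => by positivity) (p := q/2) (by linarith)
  have h2 := Real.rpow_le_rpow (by positivity) this (by positivity : 0 ≤ 1/q)
  rw [← Real.rpow_mul (by positivity)] at h2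
  have e : q/2 * (1/q) = 1/2 := by field_simp
  rw [e] at h2
  refine h2.trans (le_of_eq ?_)
  congr 1
  refine Finset.sum_congr rfl fun ε _ => ?_
  congr 1
  rw [← Real.rpow_natCast, ← Real.rpow_mul (norm_nonneg _)]
  congr 1
  push_cast; ring
end summing

section DR

lemma orthonormal_cons {V : Type*} [NormedAddCommGroup V] [InnerProductSpace ℝ V] {k : ℕ}
    {z : Fin k → V} (hz : Orthonormal ℝ z) (w : V) (hw : ‖w‖ = 1)
    (hzw : ∀ i, inner ℝ (z i) w = 0) : Orthonormal ℝ (Fin.cons w z : Fin (k+1) → V) := by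
  constructor
  · intro i
    refine Fin.cases ?_ (fun i => ?_) i
    · simpa using hw
    · simpa using hz.1 i
  · intro i j
    refine Fin.cases ?_ (fun i => ?_) i <;> refine Fin.cases ?_ (fun j => ?_) j
    · intro h; exact absurd rfl h
    · intro _; simp only [Fin.cons_zero, Fin.cons_succ]; rw [real_inner_comm]; exact hzw j
    · intro _; simp only [Fin.cons_zero, Fin.cons_succ]; exact hzw i
    · intro h; simp only [Fin.cons_succ]; exact hz.2 (fun e => h (by rw [e]))

lemma det_one_add_proj {V : Type*} [NormedAddCommGroup V] [InnerProductSpace ℝ V]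
    [FiniteDimensional ℝ V] (W : Submodule ℝ V) :
    LinearMap.det ((ContinuousLinearMap.id ℝ V + W.starProjection : V →L[ℝ] V) : V →ₗ[ℝ] V)
      = 2 ^ Module.finrank ℝ W := by
  set f : V →ₗ[ℝ] V := ((ContinuousLinearMap.id ℝ V + W.starProjection : V →L[ℝ] V) : V →ₗ[ℝ] V)
    with hf
  have hfa : ∀ x, f x = x + W.starProjection x := fun x => rfl
  have he : W ≤ W.comap f := fun x hx => by
    rw [Submodule.mem_comap, hfa]
    exact W.add_mem hx (W.starProjection_apply_mem x)
  rw [LinearMap.det_eq_det_mul_det W f he]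
  have h1 : f.restrict he = (2:ℝ) • LinearMap.id := by
    refine LinearMap.ext fun x => Subtype.ext ?_
    change f x = (2:ℝ) • (x : V)
    rw [hfa, Submodule.starProjection_eq_self_iff.2 x.2, two_smul]
  have h2 : W.mapQ W f he = LinearMap.id := by
    refine LinearMap.ext fun y => ?_
    obtain ⟨x, rfl⟩ := Submodule.Quotient.mk_surjective W y
    rw [Submodule.mapQ_apply, LinearMap.id_apply, Submodule.Quotient.eq, hfa]
    simp
  rw [h1, h2, LinearMap.det_smul]
  simp

lemma dvoretzky_rogers {F : Type*} [NormedAddCommGroup F] [NormedSpace ℝ F] 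
    (n : ℕ) (hn : 1 ≤ n) (hF : Module.finrank ℝ F = n) :
    ∃ k : ℕ, n ≤ 2 * k ∧ ∃ x : Fin k → F, (∀ i, 1/4 ≤ ‖x i‖) ∧
      ∀ a : EuclideanSpace ℝ (Fin k), ‖∑ i, a i • x i‖ ≤ ‖a‖ := by
  have : FiniteDimensional ℝ F := Module.finite_of_finrank_pos (by omega)
  let V := EuclideanSpace ℝ (Fin n)
  have hV : Module.finrank ℝ V = n := finrank_euclideanSpace_fin
  let e : F ≃L[ℝ] V := ContinuousLinearEquiv.ofFinrankEq (hF.trans hV.symm)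
  let φ : (V →L[ℝ] F) → ℝ := fun u => |((e : F →L[ℝ] V) ∘L u).det|
  have hφ : Continuous φ := by
    refine continuous_abs.comp (ContinuousLinearMap.continuous_det.comp ?_)
    exact (ContinuousLinearMap.compL ℝ V F V (e : F →L[ℝ] V)).continuous
  have : ProperSpace (V →L[ℝ] F) := FiniteDimensional.proper ℝ _
  obtain ⟨u, hu1, humax⟩ := (isCompact_closedBall (0 : V →L[ℝ] F) 1).exists_isMaxOn
    ⟨0, by simp⟩ hφ.continuousOn
  have hu : ‖u‖ ≤ 1 := by simpa using hu1
  have hmax : ∀ v : V →L[ℝ] F, ‖v‖ ≤ 1 → φ v ≤ φ u := fun v hv => humax (by simpa using hv)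
  have hscale : ∀ (c : ℝ) (v : V →L[ℝ] F), φ (c • v) = |c| ^ n * φ v := by
    intro c v
    simp only [φ]
    rw [ContinuousLinearMap.comp_smul, ContinuousLinearMap.det, ContinuousLinearMap.toLinearMap_smul,
      LinearMap.det_smul, abs_mul, abs_pow, hV]
  have hpos : 0 < φ u := by
    have h1 : φ (e.symm : V →L[ℝ] F) = 1 := by
      simp only [φ]
      rw [ContinuousLinearEquiv.coe_comp_coe_symm, ContinuousLinearMap.det]
      simp
    set c : ℝ := (‖(e.symm : V →L[ℝ] F)‖ + 1)⁻¹ with hc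
    have hc0 : 0 < c := by positivity
    have h2 := hmax (c • (e.symm : V →L[ℝ] F)) (by
      rw [norm_smul, Real.norm_eq_abs, abs_of_pos hc0, hc, inv_mul_le_iff₀ (by positivity)]
      linarith)
    rw [hscale, h1] at h2
    refine lt_of_lt_of_le ?_ h2
    positivity
  -- maximal orthonormal family
  let P : ℕ → Prop := fun k => ∃ z : Fin k → V, Orthonormal ℝ z ∧ ∀ i, 1/4 ≤ ‖u (z i)‖
  have hPle : ∀ k, P k → k ≤ n := by
    rintro k ⟨z, hz, -⟩
    have := hz.linearIndependent.fintype_card_le_finrank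
    simpa [hV] using this
  have hP0 : P 0 := ⟨fun i => i.elim0, ⟨fun i => i.elim0, fun i => i.elim0⟩, fun i => i.elim0⟩
  obtain ⟨k, hk, hkmax⟩ : ∃ k, P k ∧ ¬ P (k+1) := by
    by_contra! hcon
    have : ∀ k, P k := fun k => Nat.rec hP0 (fun k ih => hcon k ih) k
    have := hPle _ (this (n+1))
    omega
  obtain ⟨z, hz, hzu⟩ := hk
  set W : Submodule ℝ V := (Submodule.span ℝ (Set.range z))ᗮ with hW
  have hWrank : k + Module.finrank ℝ W = n := by
    have h1 := Submodule.finrank_add_finrank_orthogonal (Submodule.span ℝ (Set.range z))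
    rw [finrank_span_eq_card hz.linearIndependent, Fintype.card_fin, hV] at h1
    exact h1
  have hWu : ∀ w ∈ W, ‖u w‖ ≤ 1/4 * ‖w‖ := by
    intro w hw
    by_contra! hcon
    have hw0 : w ≠ 0 := by rintro rfl; simp at hcon
    have hwn : 0 < ‖w‖ := norm_pos_iff.2 hw0
    refine hkmax ⟨Fin.cons (‖w‖⁻¹ • w) z, orthonormal_cons hz _ (norm_smul_inv_norm hw0) ?_, ?_⟩
    · intro i
      rw [inner_smul_right, (Submodule.mem_orthogonal _ _).1 hw _ (Submodule.subset_span ⟨i, rfl⟩), mul_zero]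
    · intro i
      refine Fin.cases ?_ (fun i => ?_) i
      · simp only [Fin.cons_zero, map_smul, norm_smul, norm_inv]
        rw [Real.norm_of_nonneg hwn.le]
        rw [le_inv_mul_iff₀ hwn]; linarith
      · simpa using hzu i
  refine ⟨k, ?_, fun i => u (z i), hzu, ?_⟩
  · set m := Module.finrank ℝ W with hm
    by_contra! hcon
    have hv : φ (u ∘L (ContinuousLinearMap.id ℝ V + W.starProjection)) = φ u * 2 ^ m := by
      simp only [φ]
      rw [← ContinuousLinearMap.comp_assoc]
      have : ∀ f g : V →L[ℝ] V, (f ∘L g).det = f.det * g.det := fun f g => by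
        simp only [ContinuousLinearMap.det]
        exact LinearMap.det_comp _ _
      rw [this, abs_mul]
      congr 1
      rw [ContinuousLinearMap.det, det_one_add_proj, abs_of_pos (by positivity)]
    have hnorm : ‖u ∘L (ContinuousLinearMap.id ℝ V + W.starProjection)‖ ≤ 5/4 := by
      refine ContinuousLinearMap.opNorm_le_bound _ (by norm_num) fun y => ?_
      simp only [ContinuousLinearMap.comp_apply, _root_.add_apply,
        ContinuousLinearMap.id_apply, map_add]
      have h1 : ‖u y‖ ≤ 1 * ‖y‖ := u.le_of_opNorm_le hu y
      have h2 := hWu (W.starProjection y) (W.starProjection_apply_mem y)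
      have h3 := W.norm_starProjection_apply_le y
      have h4 := norm_add_le (u y) (u (W.starProjection y))
      linarith
    have h5 := hmax ((4/5 : ℝ) • (u ∘L (ContinuousLinearMap.id ℝ V + W.starProjection))) (by
      rw [norm_smul, Real.norm_of_nonneg (by norm_num)]; linarith)
    rw [hscale, hv] at h5
    have h6 : |(4/5 : ℝ)| ^ n * 2 ^ m ≤ 1 := by
      by_contra! h7
      nlinarith
    have h8 : (|(4/5 : ℝ)| ^ n * 2 ^ m) ^ 2 ≤ 1 := by
      have : 0 ≤ |(4/5 : ℝ)| ^ n * 2 ^ m := by positivity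
      nlinarith
    rw [mul_pow, ← pow_mul, ← pow_mul, abs_of_pos (by norm_num)] at h8
    have h9 : (2:ℝ) ^ n ≤ 2 ^ (m * 2) := pow_le_pow_right₀ (by norm_num) (by omega)
    have h10 : (1:ℝ) < (4/5) ^ (n*2) * 2 ^ n := by
      rw [mul_comm n 2, pow_mul, ← mul_pow]
      exact one_lt_pow₀ (by norm_num) (by omega)
    have : (4/5:ℝ) ^ (n*2) * 2 ^ n ≤ (4/5) ^ (n*2) * 2 ^ (m*2) := by gcongr
    linarith
  · intro a
    have h1 : ∑ i, a i • u (z i) = u (∑ i, a i • z i) := by simp [map_sum]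
    rw [h1]
    refine (u.le_of_opNorm_le hu _).trans ?_
    rw [one_mul]
    have h2 : ‖∑ i, a i • z i‖ ^ 2 = ‖a‖ ^ 2 := by
      rw [← real_inner_self_eq_norm_sq, hz.inner_sum, EuclideanSpace.norm_sq_eq]
      simp [sq]
    exact (pow_le_pow_iff_left₀ (norm_nonneg _) (norm_nonneg _) two_ne_zero).1 h2.le
end DR


section final

/-- bounded measurable functions -/
def bddMeas : Submodule ℝ (ℝ → ℝ) where
  carrier := {f | Measurable f ∧ ∃ M, ∀ t, |f t| ≤ M}
  add_mem' := by
    rintro f g ⟨hf, M, hM⟩ ⟨hg, N, hN⟩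
    exact ⟨hf.add hg, M + N, fun t => (abs_add_le _ _).trans (add_le_add (hM t) (hN t))⟩
  zero_mem' := ⟨measurable_const, 0, by simp⟩
  smul_mem' := by
    rintro c f ⟨hf, M, hM⟩
    refine ⟨hf.const_smul c, |c| * M, fun t => ?_⟩
    simp only [Pi.smul_apply, smul_eq_mul, abs_mul]
    exact mul_le_mul_of_nonneg_left (hM t) (abs_nonneg _)

lemma bddMeas_memLp (f : bddMeas) : MemLp (f : ℝ → ℝ) ∞ μ01 := by
  obtain ⟨f, hf, M, hM⟩ := f
  exact memLp_top_of_bound hf.aestronglyMeasurable M (Eventually.of_forall hM)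

/-- the canonical map -/
noncomputable def toLinf : bddMeas →ₗ[ℝ] Lp ℝ ∞ μ01 where
  toFun f := (bddMeas_memLp f).toLp _
  map_add' f g := MemLp.toLp_add (bddMeas_memLp f) (bddMeas_memLp g)
  map_smul' c f := MemLp.toLp_const_smul c (bddMeas_memLp f)

lemma exists_S {X : Type*} [NormedAddCommGroup X] [NormedSpace ℝ X] (T : Lp ℝ ∞ μ01 →L[ℝ] X) :
    ∃ S : (ℝ → ℝ) →ₗ[ℝ] X, SBound S ‖T‖ ∧ ∀ (f : ℝ → ℝ), Measurable f → ∀ M : ℝ,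
      (∀ t, |f t| ≤ M) → ∀ g : Lp ℝ ∞ μ01, f =ᵐ[μ01] g → S f = T g := by
  obtain ⟨S, hS⟩ := LinearMap.exists_extend ((T : Lp ℝ ∞ μ01 →ₗ[ℝ] X) ∘ₗ toLinf)
  have hS' : ∀ f : bddMeas, S f = T (toLinf f) := fun f => by
    rw [← Submodule.subtype_apply, ← LinearMap.comp_apply, hS]; rfl
  refine ⟨S, ?_, ?_⟩
  · intro f M hM hf hb
    have := hS' ⟨f, hf, M, hb⟩
    rw [this]
    refine T.le_opNorm_of_le ?_
    have h := Lp.norm_le_of_ae_bound (f := toLinf ⟨f, hf, M, hb⟩) hM (by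
      filter_upwards [(bddMeas_memLp ⟨f, hf, M, hb⟩).coeFn_toLp] with t ht
      change ‖(MemLp.toLp _ (bddMeas_memLp ⟨f, hf, M, hb⟩)) t‖ ≤ M
      rw [ht]; exact hb t)
    simpa using h
  · intro f hf M hb g hg
    rw [hS' ⟨f, hf, M, hb⟩]
    congr 1
    refine Lp.ext ((bddMeas_memLp ⟨f, hf, M, hb⟩).coeFn_toLp.trans hg)

lemma ae_sq_le {k : ℕ} (x : Fin k → Lp ℝ ∞ μ01)
    (h : ∀ a : EuclideanSpace ℝ (Fin k), ‖∑ i, a i • x i‖ ≤ ‖a‖) :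
    ∀ᵐ t ∂μ01, ∑ i, x i t ^ 2 ≤ 1 := by
  have h1 : ∀ a : EuclideanSpace ℝ (Fin k), ∀ᵐ t ∂μ01, |∑ i, a i * x i t| ≤ ‖a‖ := by
    intro a
    have e1 : ∀ᵐ t ∂μ01, (∑ i, a i • x i : Lp ℝ ∞ μ01) t = ∑ i, a i * x i t := by
      have e2 := Lp.coeFn_finsetSum (p := ∞) (μ := μ01) Finset.univ (fun i => a i • x i)
      have e3 : ∀ᵐ t ∂μ01, ∀ i, (a i • x i : Lp ℝ ∞ μ01) t = a i * x i t := by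
        rw [ae_all_iff]
        intro i
        filter_upwards [Lp.coeFn_smul (a i) (x i)] with t ht
        rw [ht]; rfl
      filter_upwards [e2, e3] with t h2 h3
      rw [h2, Finset.sum_apply]
      exact Finset.sum_congr rfl fun i _ => h3 i
    have e4 := enorm_ae_le_eLpNormEssSup (∑ i, a i • x i : Lp ℝ ∞ μ01) μ01
    filter_upwards [e1, e4] with t h1 h4
    rw [← h1, ← Real.norm_eq_abs]
    refine le_trans ?_ (h a)
    rw [Lp.norm_def, eLpNorm_exponent_top, ← toReal_enorm]
    refine ENNReal.toReal_mono ?_ h4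
    rw [← eLpNorm_exponent_top]
    exact Lp.eLpNorm_ne_top _
  obtain ⟨D, hDc, hDd⟩ := TopologicalSpace.exists_countable_dense (EuclideanSpace ℝ (Fin k))
  have h2 : ∀ᵐ t ∂μ01, ∀ a ∈ D, |∑ i, a i * x i t| ≤ ‖a‖ := (ae_ball_iff hDc).2 fun a _ => h1 a
  filter_upwards [h2] with t ht
  have h3 : ∀ a : EuclideanSpace ℝ (Fin k), |∑ i, a i * x i t| ≤ ‖a‖ := by
    have hcl : IsClosed {a : EuclideanSpace ℝ (Fin k) | |∑ i, a i * x i t| ≤ ‖a‖} :=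
      isClosed_le (by fun_prop) (by fun_prop)
    intro a
    have : closure D ⊆ {a : EuclideanSpace ℝ (Fin k) | |∑ i, a i * x i t| ≤ ‖a‖} :=
      hcl.closure_subset_iff.2 ht
    exact this (hDd a)
  have h4 := h3 (WithLp.toLp 2 fun i => x i t)
  have h5 : ‖(WithLp.toLp 2 fun i => x i t : EuclideanSpace ℝ (Fin k))‖ ^ 2 = ∑ i, x i t ^ 2 := by
    rw [EuclideanSpace.norm_sq_eq]; simp
  set N := ‖(WithLp.toLp 2 fun i => x i t : EuclideanSpace ℝ (Fin k))‖ with hN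
  have h6 : ∑ i, x i t ^ 2 ≤ N := by
    refine le_trans (le_of_eq ?_) ((le_abs_self _).trans h4)
    exact Finset.sum_congr rfl fun i _ => by simp [sq]
  have hN0 : 0 ≤ N := norm_nonneg _
  rw [← h5] at h6 ⊢
  nlinarith

lemma bernstein_bound {X : Type*} [NormedAddCommGroup X] [NormedSpace ℝ X]
    {q C : ℝ} (hq : 2 ≤ q) (hC : 0 < C) (hcot : HasCotype q C X) (T : Lp ℝ ∞ μ01 →L[ℝ] X)
    (n : ℕ) (hn : 1 ≤ n) :
    bernsteinNumber T n ≤ (8 * (C * (DD q * C))) * ‖T‖ * (n : ℝ) ^ (-(1 / q)) := by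
  have hq0 : 0 < q := by linarith
  have hD := DD_pos hq
  have hn0 : (0:ℝ) < n := by exact_mod_cast hn
  refine Real.sSup_le ?_ (by positivity)
  rintro r ⟨F, hF, rfl⟩
  set r := sInf {s : ℝ | ∃ x ∈ F, x ≠ 0 ∧ s = ‖T x‖ / ‖x‖} with hr
  have hr0 : 0 ≤ r := Real.sInf_nonneg (by rintro s ⟨x, -, -, rfl⟩; positivity)
  have hrx : ∀ x ∈ F, r * ‖x‖ ≤ ‖T x‖ := by
    intro x hx
    rcases eq_or_ne x 0 with rfl | hx0
    · simp
    · rw [← le_div_iff₀ (norm_pos_iff.2 hx0)]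
      exact csInf_le ⟨0, by rintro s ⟨x, -, -, rfl⟩; positivity⟩ ⟨x, hx, hx0, rfl⟩
  obtain ⟨k, hk, y, hy, hya⟩ := dvoretzky_rogers (F := F) n hn hF
  set x : Fin k → Lp ℝ ∞ μ01 := fun i => (y i : Lp ℝ ∞ μ01) with hx
  have hxa : ∀ a : EuclideanSpace ℝ (Fin k), ‖∑ i, a i • x i‖ ≤ ‖a‖ := by
    intro a
    have := hya a
    have e : ∑ i, a i • x i = ((∑ i, a i • y i : F) : Lp ℝ ∞ μ01) := by
      rw [AddSubmonoidClass.coe_finset_sum]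
      rfl
    rw [e]
    exact this
  have hae := ae_sq_le x hxa
  obtain ⟨S, hSb, hST⟩ := exists_S T
  have hxm : ∀ i, Measurable (x i : ℝ → ℝ) := fun i => (Lp.stronglyMeasurable (x i)).measurable
  set G : Set ℝ := {t | ∑ i, x i t ^ 2 ≤ 1} with hG
  have hGm : MeasurableSet G :=
    measurableSet_le (Finset.measurable_sum _ fun i _ => (hxm i).pow_const 2) measurable_const
  set w : Fin k → ℝ → ℝ := fun i => G.indicator (x i) with hw
  have hwm : ∀ i, Measurable (w i) := fun i => (hxm i).indicator hGm
  have hws : ∀ t, ∑ i, w i t ^ 2 ≤ 1 := by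
    intro t
    by_cases ht : t ∈ G
    · simp only [hw, Set.indicator_of_mem ht]; exact ht
    · simp [hw, Set.indicator_of_notMem ht]
  have hw1 : ∀ i t, |w i t| ≤ 1 := by
    intro i t
    rw [← sq_le_one_iff_abs_le_one]
    exact (Finset.single_le_sum (f := fun i => w i t ^ 2) (fun i _ => sq_nonneg _)
      (Finset.mem_univ i)).trans (hws t)
  have hSw : ∀ i, S (w i) = T (x i) := by
    intro i
    refine hST _ (hwm i) 1 (hw1 i) _ ?_
    filter_upwards [hae] with t ht
    exact Set.indicator_of_mem (s := G) ht _
  have hmain := q2_summing hq hC (norm_nonneg T) hcot hSb k w hwm hws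
  simp only [hSw] at hmain
  have hlow : ∀ i, r / 4 ≤ ‖T (x i)‖ := by
    intro i
    refine le_trans ?_ (hrx _ (y i).2)
    have : (1:ℝ)/4 ≤ ‖(y i : Lp ℝ ∞ μ01)‖ := hy i
    nlinarith
  have hsum : (k:ℝ) * (r/4) ^ q ≤ ∑ i, ‖T (x i)‖ ^ q := by
    calc (k:ℝ) * (r/4) ^ q = ∑ i : Fin k, (r/4) ^ q := by simp
      _ ≤ _ := Finset.sum_le_sum fun i _ => Real.rpow_le_rpow (by positivity) (hlow i) hq0.le
  have h1 : ((k:ℝ) * (r/4) ^ q) ^ (1/q) ≤ C * (DD q * (C * ‖T‖)) :=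
    (Real.rpow_le_rpow (by positivity) hsum (by positivity)).trans hmain
  rw [Real.mul_rpow (by positivity) (by positivity), ← Real.rpow_mul (by positivity),
    mul_one_div_cancel hq0.ne', Real.rpow_one] at h1
  have hkn : (n:ℝ) ≤ 2 * k := by exact_mod_cast hk
  have h2 : (n:ℝ) ^ (1/q) ≤ 2 * (k:ℝ) ^ (1/q) := by
    refine (Real.rpow_le_rpow hn0.le hkn (by positivity)).trans ?_
    rw [Real.mul_rpow (by norm_num) (by positivity)]
    gcongr
    calc (2:ℝ) ^ (1/q) ≤ 2 ^ (1:ℝ) := by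
          refine Real.rpow_le_rpow_of_exponent_le (by norm_num) ?_
          rw [div_le_one hq0]; linarith
      _ = 2 := Real.rpow_one 2
  rw [Real.rpow_neg hn0.le, ← div_eq_mul_inv, le_div_iff₀ (by positivity)]
  calc r * (n:ℝ) ^ (1/q) ≤ r * (2 * (k:ℝ) ^ (1/q)) := by gcongr
    _ = 8 * ((k:ℝ) ^ (1/q) * (r/4)) := by ring
    _ ≤ 8 * (C * (DD q * (C * ‖T‖))) := by gcongr
    _ = _ := by ring

end final

/-- If `X` has cotype `q ∈ [2, ∞)`, then there is a constant `K > 0` such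
that every bounded operator `T : L_∞[0,1] → X` satisfies `b_n(T) ≤ K ‖T‖ n^(-1/q)` for all
`n ≥ 1`; in particular every such operator is super strictly singular. -/
theorem statement8 {X : Type*} [NormedAddCommGroup X] [NormedSpace ℝ X] [CompleteSpace X]
    (q C : ℝ) (hq : 2 ≤ q) (hC : 0 < C) (hcot : HasCotype q C X) :
    ∃ K : ℝ, 0 < K ∧ ∀ T : Lp ℝ ∞ μ01 →L[ℝ] X,
      (∀ n : ℕ, 1 ≤ n → bernsteinNumber T n ≤ K * ‖T‖ * (n : ℝ) ^ (-(1 / q))) ∧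
      SuperStrictlySingular T := by
  have hq0 : 0 < q := by linarith
  have hD := DD_pos hq
  refine ⟨8 * (C * (DD q * C)), by positivity, fun T => ?_⟩
  have hb := bernstein_bound hq hC hcot T
  refine ⟨hb, ?_⟩
  unfold SuperStrictlySingular
  have hlim : Tendsto (fun n : ℕ => (8 * (C * (DD q * C))) * ‖T‖ * (n : ℝ) ^ (-(1 / q))) atTop
      (nhds 0) := by
    have h1 := (tendsto_rpow_neg_atTop (y := 1/q) (by positivity)).comp
      (tendsto_natCast_atTop_atTop (R := ℝ))
    simpa using h1.const_mul ((8 * (C * (DD q * C))) * ‖T‖)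
  refine tendsto_of_tendsto_of_tendsto_of_le_of_le' tendsto_const_nhds hlim ?_ ?_
  · refine Eventually.of_forall fun n => Real.sSup_nonneg ?_
    rintro r ⟨F, -, rfl⟩
    refine Real.sInf_nonneg ?_
    rintro s ⟨x, -, -, rfl⟩
    positivity
  · filter_upwards [eventually_ge_atTop 1] with n hn using hb n hn
end

section
/- Let 1 ≤ q < p < ∞ and let T: L_p[0,1] → L_q[0,1] be a positive bounded operator. Then T is M-weakly compact: for every norm-bounded pairwise disjoint sequence (x_n) in L_p, ‖Tx_n‖_q → 0. -/
open MeasureTheory ENNReal Filter Set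

section Helpers

variable {r : ℝ}

lemma aux_norm_rpow (hr : 1 ≤ r) (f : Lp ℝ (ENNReal.ofReal r) μ01) :
    ‖f‖ ^ r = ∫ t, ‖f t‖ ^ r ∂μ01 := by
  have hr0 : 0 < r := by linarith
  have h0 : ENNReal.ofReal r ≠ 0 := by simpa using hr0
  have hn : 0 ≤ ∫ t, ‖f t‖ ^ r ∂μ01 := integral_nonneg fun t => by positivity
  rw [Lp.norm_def, (Lp.memLp f).eLpNorm_eq_integral_rpow_norm h0 ENNReal.ofReal_ne_top,
    ENNReal.toReal_ofReal hr0.le, ENNReal.toReal_ofReal (by positivity),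
    ← Real.rpow_mul hn, inv_mul_cancel₀ hr0.ne', Real.rpow_one]

lemma aux_int (hr : 1 ≤ r) (f : Lp ℝ (ENNReal.ofReal r) μ01) :
    Integrable (fun t => ‖f t‖ ^ r) μ01 := by
  have h := (Lp.memLp f).integrable_norm_rpow'
  rwa [ENNReal.toReal_ofReal (by linarith)] at h

lemma aux_super (hr : 1 ≤ r) (f g : Lp ℝ (ENNReal.ofReal r) μ01) (hf : 0 ≤ f) (hg : 0 ≤ g) :
    ‖f‖ ^ r + ‖g‖ ^ r ≤ ‖f + g‖ ^ r := by
  rw [aux_norm_rpow hr, aux_norm_rpow hr, aux_norm_rpow hr,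
    ← integral_add (aux_int hr f) (aux_int hr g)]
  refine integral_mono_ae ((aux_int hr f).add (aux_int hr g)) (aux_int hr (f + g)) ?_
  filter_upwards [Lp.coeFn_add f g, (Lp.coeFn_nonneg f).2 hf, (Lp.coeFn_nonneg g).2 hg]
    with t h1 h2 h3
  simp only [Pi.zero_apply, Pi.add_apply] at h1 h2 h3 ⊢
  rw [h1, Real.norm_of_nonneg h2, Real.norm_of_nonneg h3, Real.norm_of_nonneg (add_nonneg h2 h3)]
  exact Real.add_rpow_le_rpow_add h2 h3 hr

lemma aux_disj (hr : 1 ≤ r) (f g : Lp ℝ (ENNReal.ofReal r) μ01) (h : f ⊓ g = 0) :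
    ‖f + g‖ ^ r ≤ ‖f‖ ^ r + ‖g‖ ^ r := by
  have hr0 : r ≠ 0 := by linarith
  rw [aux_norm_rpow hr, aux_norm_rpow hr, aux_norm_rpow hr,
    ← integral_add (aux_int hr f) (aux_int hr g)]
  refine integral_mono_ae (aux_int hr (f + g)) ((aux_int hr f).add (aux_int hr g)) ?_
  have hz : ⇑(f ⊓ g) =ᵐ[μ01] 0 := by rw [h]; exact Lp.coeFn_zero _ _ _
  filter_upwards [Lp.coeFn_add f g, Lp.coeFn_inf f g, hz] with t h1 h2 h3
  simp only [Pi.zero_apply, Pi.add_apply, Pi.inf_apply] at h1 h2 h3 ⊢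
  rw [h1]
  rw [h3] at h2
  rcases min_choice (f t) (g t) with h4 | h4
  · have : f t = 0 := by rw [← h4]; exact h2.symm
    simp [this, Real.zero_rpow hr0]
  · have : g t = 0 := by rw [← h4]; exact h2.symm
    simp [this, Real.zero_rpow hr0]

lemma aux_inf_add (f g h : Lp ℝ (ENNReal.ofReal r) μ01) (hg : f ⊓ g = 0) (hh : f ⊓ h = 0) :
    f ⊓ (g + h) = 0 := by
  have hz : ⇑(f ⊓ g) =ᵐ[μ01] 0 := by rw [hg]; exact Lp.coeFn_zero _ _ _
  have hz' : ⇑(f ⊓ h) =ᵐ[μ01] 0 := by rw [hh]; exact Lp.coeFn_zero _ _ _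
  apply Lp.ext
  filter_upwards [Lp.coeFn_add g h, Lp.coeFn_inf f g, Lp.coeFn_inf f h, Lp.coeFn_inf f (g + h),
    hz, hz', Lp.coeFn_zero ℝ (ENNReal.ofReal r) μ01] with t h1 h2 h3 h4 h5 h6 h7
  simp only [Pi.zero_apply, Pi.add_apply, Pi.inf_apply] at *
  rw [h4, h1, h7]
  rw [h5] at h2
  rw [h6] at h3
  grind

lemma aux_super_sum [Fact (1 ≤ ENNReal.ofReal r)] (hr : 1 ≤ r)
    (f : ℕ → Lp ℝ (ENNReal.ofReal r) μ01) (hf : ∀ n, 0 ≤ f n) (F : Finset ℕ) :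
    ∑ k ∈ F, ‖f k‖ ^ r ≤ ‖∑ k ∈ F, f k‖ ^ r := by
  classical
  induction F using Finset.induction_on with
  | empty => simp [Real.zero_rpow (show r ≠ 0 by linarith)]
  | insert a F ha ih =>
    rw [Finset.sum_insert ha, Finset.sum_insert ha]
    have := aux_super hr (f a) (∑ k ∈ F, f k) (hf a) (Finset.sum_nonneg fun k _ => hf k)
    linarith

lemma aux_disj_sum [Fact (1 ≤ ENNReal.ofReal r)] (hr : 1 ≤ r)
    (f : ℕ → Lp ℝ (ENNReal.ofReal r) μ01) (hf : ∀ n, 0 ≤ f n)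
    (hd : Pairwise fun n m => f n ⊓ f m = 0) (F : Finset ℕ) :
    ‖∑ k ∈ F, f k‖ ^ r ≤ ∑ k ∈ F, ‖f k‖ ^ r := by
  classical
  induction F using Finset.induction_on with
  | empty => simp [Real.zero_rpow (show r ≠ 0 by linarith)]
  | insert a F ha ih =>
    rw [Finset.sum_insert ha, Finset.sum_insert ha]
    have key : ∀ G : Finset ℕ, a ∉ G → f a ⊓ (∑ k ∈ G, f k) = 0 := by
      intro G
      induction G using Finset.induction_on with
      | empty => intro _; simpa using hf a
      | insert b G hb ihG =>
        intro hab
        rw [Finset.mem_insert, not_or] at hab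
        rw [Finset.sum_insert hb]
        exact aux_inf_add _ _ _ (hd hab.1) (ihG hab.2)
    have := aux_disj hr (f a) (∑ k ∈ F, f k) (key F ha)
    linarith

end Helpers

/-- Let `1 ≤ q < p < ∞` and let `T : L_p[0,1] → L_q[0,1]` be a positive
bounded operator. Then `T` is M-weakly compact: for every norm-bounded pairwise disjoint
sequence `(x n)` in `L_p`, `‖T x_n‖_q → 0`. -/
theorem statement12 (p q : ℝ) (hq : 1 ≤ q) (hqp : q < p)
    [Fact (1 ≤ ENNReal.ofReal p)] [Fact (1 ≤ ENNReal.ofReal q)]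
    (T : Lp ℝ (ENNReal.ofReal p) μ01 →L[ℝ] Lp ℝ (ENNReal.ofReal q) μ01)
    (hpos : ∀ f, 0 ≤ f → 0 ≤ T f)
    (x : ℕ → Lp ℝ (ENNReal.ofReal p) μ01)
    (B : ℝ) (hB : ∀ n, ‖x n‖ ≤ B)
    (hdisj : Pairwise fun n m => |x n| ⊓ |x m| = 0) :
    Filter.Tendsto (fun n => ‖T (x n)‖) atTop (nhds 0) := by
  have hp1 : 1 ≤ p := by linarith
  have hp0 : 0 < p := by linarith
  have hq0 : 0 < q := by linarith
  have hB0 : 0 ≤ B := (norm_nonneg _).trans (hB 0)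
  have habs : ∀ n, ‖T (x n)‖ ≤ ‖T |x n|‖ := by
    intro n
    apply norm_le_norm_of_abs_le_abs
    rw [abs_of_nonneg (hpos _ (abs_nonneg _))]
    have h1 := hpos _ (sub_nonneg.2 (le_abs_self (x n)))
    have h2 := hpos _ (sub_nonneg.2 (neg_le_abs (x n)))
    rw [map_sub, sub_nonneg] at h1 h2
    rw [map_neg] at h2
    exact abs_le'.2 ⟨h1, h2⟩
  have main : ∀ F : Finset ℕ, ∑ k ∈ F, ‖T (x k)‖ ^ q
      ≤ ‖T‖ ^ q * B ^ q * (F.card : ℝ) ^ (q / p) := by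
    intro F
    have hS : ‖∑ k ∈ F, |x k|‖ ^ p ≤ F.card * B ^ p := by
      refine (aux_disj_sum hp1 (fun n => |x n|) (fun n => abs_nonneg _) hdisj F).trans ?_
      calc ∑ k ∈ F, ‖|x k|‖ ^ p ≤ ∑ k ∈ F, B ^ p := by
            refine Finset.sum_le_sum fun k _ => ?_
            rw [norm_abs_eq_norm]
            exact Real.rpow_le_rpow (norm_nonneg _) (hB k) hp0.le
        _ = F.card * B ^ p := by simp
    have hSq : ‖∑ k ∈ F, |x k|‖ ^ q ≤ (F.card : ℝ) ^ (q / p) * B ^ q := by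
      have h := Real.rpow_le_rpow (by positivity) hS (show 0 ≤ q / p by positivity)
      rw [Real.mul_rpow (by positivity) (by positivity), ← Real.rpow_mul (norm_nonneg _),
        ← Real.rpow_mul hB0, mul_div_cancel₀ _ hp0.ne'] at h
      exact h
    calc ∑ k ∈ F, ‖T (x k)‖ ^ q ≤ ∑ k ∈ F, ‖T |x k|‖ ^ q :=
          Finset.sum_le_sum fun k _ => Real.rpow_le_rpow (norm_nonneg _) (habs k) hq0.le
      _ ≤ ‖∑ k ∈ F, T |x k|‖ ^ q :=
          aux_super_sum hq (fun k => T |x k|) (fun k => hpos _ (abs_nonneg _)) F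
      _ = ‖T (∑ k ∈ F, |x k|)‖ ^ q := by rw [map_sum]
      _ ≤ (‖T‖ * ‖∑ k ∈ F, |x k|‖) ^ q :=
          Real.rpow_le_rpow (norm_nonneg _) (T.le_opNorm _) hq0.le
      _ = ‖T‖ ^ q * ‖∑ k ∈ F, |x k|‖ ^ q := Real.mul_rpow (norm_nonneg _) (norm_nonneg _)
      _ ≤ ‖T‖ ^ q * ((F.card : ℝ) ^ (q / p) * B ^ q) := by gcongr
      _ = _ := by ring
  by_contra hcon
  have hex : ∃ δ > 0, ∃ᶠ n in atTop, δ ≤ ‖T (x n)‖ := by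
    by_contra hno
    push Not at hno
    apply hcon
    rw [Metric.tendsto_nhds]
    intro ε hε
    filter_upwards [hno ε hε] with n hn
    simpa using hn
  obtain ⟨δ, hδ, hfr⟩ := hex
  have hinf := Nat.frequently_atTop_iff_infinite.1 hfr
  have hlim : Tendsto (fun N : ℕ => (N : ℝ) ^ (1 - q / p)) atTop atTop :=
    (tendsto_rpow_atTop (by rw [sub_pos, div_lt_one hp0]; exact hqp)).comp
      tendsto_natCast_atTop_atTop
  obtain ⟨N, hN, hN1⟩ := ((hlim.eventually_gt_atTop (‖T‖ ^ q * B ^ q / δ ^ q)).and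
    (eventually_ge_atTop 1)).exists
  obtain ⟨F, hF, hFc⟩ := hinf.exists_subset_card_eq N
  have h1 := main F
  have h2 : (N : ℝ) * δ ^ q ≤ ∑ k ∈ F, ‖T (x k)‖ ^ q := by
    rw [← hFc, ← nsmul_eq_mul]
    exact Finset.card_nsmul_le_sum _ _ _ fun k hk => Real.rpow_le_rpow hδ.le (hF hk) hq0.le
  rw [hFc] at h1
  have hNpos : (0 : ℝ) < N := by exact_mod_cast hN1
  have hδq : 0 < δ ^ q := Real.rpow_pos_of_pos hδ q
  have hNp : 0 < (N : ℝ) ^ (q / p) := Real.rpow_pos_of_pos hNpos _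
  rw [Real.rpow_sub hNpos, Real.rpow_one, div_lt_div_iff₀ hδq hNp] at hN
  linarith
end
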